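/- Let d₀ ≥ 2, M = 𝕋^{d₀} with normalized Haar measure ν and quotient metric d, and let T be the algebraic automorphism of 𝕋^{d₀} induced by S ∈ SL_{d₀}(ℤ) none of whose eigenvalues is a root of unity. Let η > 0 and let f : M → [0,1] be η-Hölder continuous with ∫_M f dν = 1/2. On the product probability space (M × (0,1)^ℤ, ν ⊗ λ^{⊗ℤ}) (λ Lebesgue measure on (0,1)) define ξ_k(ω, (z_m)_{m∈ℤ}) := 2·1_{{z_k ≤ f(T^k ω)}} − 1. Then (ξ_k)_{k∈ℤ} is stationary, centered with finite fourth moments, satisfies Σ_{p≥0} √(1+p) |E[ξ₀ξ_p]| < ∞ and sup_{N≥1} N^{−2} Σ_{k₁,k₂,k₃,k₄=0}^{N−1} |E[ξ_{k₁}ξ_{k₂}ξ_{k₃}ξ_{k₄}]| < ∞, and there exist C > 0, nonnegative (φ_{p,s}) with φ_{p+1,s} ≤ φ_{p,s}, and an integer r ≥ 1 with lim_{s→∞} √s φ_{rs,s} = 0, such that for all 0 ≤ n₁ ≤ n₂ ≤ n₃ ≤ n₄ and all reals α_k, β_k: |Cov(exp(i Σ_{k=n₁}^{n₂} α_k ξ_k),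 exp(i Σ_{k=n₃}^{n₄} β_k ξ_k))| ≤ C(1 + Σ|α_k| + Σ|β_k|) φ_{n₃−n₂, n₄−n₃}. -/

import Mathlib

open MeasureTheory ProbabilityTheory Filter

noncomputable section

/-- Number of visits of the walk `S` to site `k` among times `1,...,n` (local time). -/
def localTime {Ω : Type*} (S : ℕ → Ω → ℤ) (n : ℕ) (k : ℤ) (ω : Ω) : ℝ :=
  ((Finset.Icc 1 n).filter (fun j => S j ω = k)).card

/-- `S` is a simple symmetric random walk on `ℤ`: `S 0 = 0` and the increments are
i.i.d. uniform on `{-1, 1}`. -/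
structure IsSSRW {Ω : Type*} [MeasurableSpace Ω] (μ : Measure Ω) (S : ℕ → Ω → ℤ) : Prop where
  meas : ∀ n, Measurable (S n)
  init : ∀ ω, S 0 ω = 0
  indep : iIndepFun (fun n ω => S (n + 1) ω - S n ω) μ
  step_one : ∀ n, μ {ω | S (n + 1) ω - S n ω = 1} = 1 / 2
  step_neg_one : ∀ n, μ {ω | S (n + 1) ω - S n ω = -1} = 1 / 2

/-- Stationarity of the sequence `(ξ k)_{k ∈ ℤ}`: all finite dimensional distributions
are invariant under a shift of the index. -/
def IsStationarySeq {Ω : Type*} [MeasurableSpace Ω] (μ : Measure Ω) (ξ : ℤ → Ω → ℝ) : Prop :=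
  ∀ (j : ℤ) (q : ℕ) (k : Fin q → ℤ),
    Measure.map (fun ω i => ξ (k i + j) ω) μ = Measure.map (fun ω i => ξ (k i) ω) μ

/-- Covariance of two complex-valued random variables. -/
def covC {Ω : Type*} [MeasurableSpace Ω] (μ : Measure Ω) (U V : Ω → ℂ) : ℂ :=
  ∫ ω, U ω * V ω ∂μ - (∫ ω, U ω ∂μ) * (∫ ω, V ω ∂μ)

/-- Condition (3): `(ξ k)` is stationary, centered, with finite fourth moments. -/
def Cond3 {Ω : Type*} [MeasurableSpace Ω] (μ : Measure Ω) (ξ : ℤ → Ω → ℝ) : Prop :=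
  IsStationarySeq μ ξ ∧ (∀ k, ∫ ω, ξ k ω ∂μ = 0) ∧ ∀ k, Integrable (fun ω => (ξ k ω) ^ 4) μ

/-- Condition (4). -/
def Cond4 {Ω : Type*} [MeasurableSpace Ω] (μ : Measure Ω) (ξ : ℤ → Ω → ℝ) : Prop :=
  Summable (fun p : ℕ => Real.sqrt (1 + (p : ℝ)) * |∫ ω, ξ 0 ω * ξ (p : ℤ) ω ∂μ|) ∧
  ∃ B : ℝ, ∀ N : ℕ, 1 ≤ N →
    ∑ k₁ ∈ Finset.range N, ∑ k₂ ∈ Finset.range N, ∑ k₃ ∈ Finset.range N,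
      ∑ k₄ ∈ Finset.range N,
        |∫ ω, ξ (k₁ : ℤ) ω * ξ (k₂ : ℤ) ω * ξ (k₃ : ℤ) ω * ξ (k₄ : ℤ) ω ∂μ| ≤ B * (N : ℝ) ^ 2

/-- The covariance inequality of condition (5), for a given constant `C` and
family `φ`. -/
def Cond5Bound {Ω : Type*} [MeasurableSpace Ω] (μ : Measure Ω) (ξ : ℤ → Ω → ℝ)
    (C : ℝ) (φ : ℕ → ℕ → ℝ) : Prop :=
  ∀ n₁ n₂ n₃ n₄ : ℕ, n₁ ≤ n₂ → n₂ ≤ n₃ → n₃ ≤ n₄ → ∀ α β : ℕ → ℝ,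
    ‖covC μ
        (fun ω => Complex.exp (Complex.I * ((∑ k ∈ Finset.Icc n₁ n₂, α k * ξ (k : ℤ) ω : ℝ) : ℂ)))
        (fun ω => Complex.exp (Complex.I * ((∑ k ∈ Finset.Icc n₃ n₄, β k * ξ (k : ℤ) ω : ℝ) : ℂ)))‖
      ≤ C * (1 + ∑ k ∈ Finset.Icc n₁ n₂, |α k| + ∑ k ∈ Finset.Icc n₃ n₄, |β k|) *
          φ (n₃ - n₂) (n₄ - n₃)

/-- Condition (5). -/
def Cond5 {Ω : Type*} [MeasurableSpace Ω] (μ : Measure Ω) (ξ : ℤ → Ω → ℝ) : Prop :=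
  ∃ C : ℝ, 0 < C ∧ ∃ (φ : ℕ → ℕ → ℝ) (r : ℕ), 1 ≤ r ∧
    (∀ p s, 0 ≤ φ p s) ∧ (∀ p s, φ (p + 1) s ≤ φ p s) ∧
    Tendsto (fun s : ℕ => Real.sqrt s * φ (r * s) s) atTop (nhds 0) ∧
    Cond5Bound μ ξ C φ

/-- The iterate `T^k` for `k ∈ ℤ` of an invertible transformation `T`
with inverse `Tinv`. -/
def Titer {M : Type*} (T Tinv : M → M) : ℤ → M → M
  | Int.ofNat n => T^[n]
  | Int.negSucc n => Tinv^[n + 1]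

open scoped ENNReal
/-- The `d`-dimensional torus `ℝ^d/ℤ^d`, realised as `(ℝ/ℤ)^d`; it carries the product
(normalised Haar) measure `volume`. -/
abbrev Torus (d : ℕ) : Type := Fin d → AddCircle (1 : ℝ)

/-- The quotient metric on the torus induced by the Euclidean metric on `ℝ^d`
(here `‖·‖` is the quotient norm on `ℝ/ℤ`). -/
def torusDist {d : ℕ} (x y : Torus d) : ℝ := Real.sqrt (∑ i, ‖x i - y i‖ ^ 2)

/-- The algebraic endomorphism of the torus induced by an integer matrix `S`. -/
def torusAut {d : ℕ} (S : Matrix (Fin d) (Fin d) ℤ) (x : Torus d) : Torus d :=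
  fun i => ∑ j, S i j • x j

/-- `S` has no eigenvalue which is a root of unity. -/
def NoRootOfUnityEigenvalue {d : ℕ} (S : Matrix (Fin d) (Fin d) ℤ) : Prop :=
  ∀ z : ℂ, (Matrix.charpoly (S.map (fun a => (a : ℂ)))).IsRoot z →
    ∀ n : ℕ, n ≠ 0 → z ^ n ≠ 1

/-- The η-Hölder constant `C_g^{(η)}` of `g` (with value `∞` if `g` is not η-Hölder),
for the Euclidean quotient metric on the torus. -/
def holderC {d : ℕ} (η : ℝ) (g : Torus d → ℂ) : ℝ≥0∞ :=
  ⨆ (x : Torus d) (y : Torus d) (_ : x ≠ y),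
    ENNReal.ofReal (‖g x - g y‖ / torusDist x y ^ η)

/-- A real function on the torus is η-Hölder continuous (for the Euclidean quotient
metric). -/
def IsHolder {d : ℕ} (η : ℝ) (f : Torus d → ℝ) : Prop :=
  ∃ c : ℝ, ∀ x y : Torus d, |f x - f y| ≤ c * torusDist x y ^ η

/-- `μ₁` is the distribution on `(0,1)^ℤ ⊆ ℝ^ℤ` of an i.i.d. sequence of random variables
uniformly distributed on `(0,1)`; this characterises the product measure `λ^{⊗ℤ}` of
Lebesgue measures on `(0,1)`. -/
def IsIIDUniform (μ₁ : MeasureTheory.Measure (ℤ → ℝ)) : Prop :=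
  MeasureTheory.IsProbabilityMeasure μ₁ ∧
  ProbabilityTheory.iIndepFun (fun (k : ℤ) (z : ℤ → ℝ) => z k) μ₁ ∧
  ∀ k : ℤ, MeasureTheory.Measure.map (fun z : ℤ → ℝ => z k) μ₁ =
    MeasureTheory.volume.restrict (Set.Ioo (0 : ℝ) 1)


/-!
By Kronecker's theorem `S`, having no root of unity among its eigenvalues, has an eigenvalue of
modulus greater than one on every rational invariant subspace. A pigeonhole argument (Siegel's
lemma) makes this quantitative: a nonzero frequency of size at most `2 ^ J` acquires an unstable
component of size at least one within `O(J)` steps. A later iterate of such a mode is therefore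
multiplied by `-1` under translation by an exponentially small unstable vector, which hardly changes
a Hölder function, and summation over dyadic shells of frequencies gives exponential decorrelation
of Hölder observables.

Conditionally on the environment the coin tosses are independent, so the covariance of two products
`∏ F k (ξ k)` over disjoint blocks is the covariance of products of Hölder functions along the
orbit. Over a block of length `s` such a product has a Hölder constant of order `Λ ^ s`, whence a
bound `Λ ^ s * ρ ^ p` across a gap `p`; a gap `p = r * s` with `r` large beats the cost `Λ ^ s`.

For fourth moments, isolating the last time gives decay in the last gap, and isolating the first
time, which is the last one for the inverse automorphism, gives decay in the first gap. The
geometric mean of the two bounds sums over all quadruples to `O(N ^ 2)`.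
-/
namespace TorusScenery


section LinearAlgebra

open Polynomial

section GrowthSpace

variable {𝕜 V : Type*} [NormedField 𝕜] [SeminormedAddCommGroup V] [NormedSpace 𝕜 V]

/-- The subspace of vectors whose forward orbit under `A` grows at most like `r ^ n`. For `r < 1`
it plays the role of a stable space of `A`, for `r` close to `1` that of a center-stable space. -/
def growthSpace (A : Module.End 𝕜 V) (r : ℝ) : Submodule 𝕜 V where
  carrier := {v | ∃ C : ℝ, ∀ n : ℕ, ‖(A ^ n) v‖ ≤ C * r ^ n}
  zero_mem' := ⟨0, fun n => by simp⟩
  add_mem' := by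
    rintro v w ⟨C, hC⟩ ⟨D, hD⟩
    refine ⟨C + D, fun n => ?_⟩
    rw [map_add, add_mul]
    exact (norm_add_le _ _).trans (add_le_add (hC n) (hD n))
  smul_mem' := by
    rintro c v ⟨C, hC⟩
    refine ⟨‖c‖ * C, fun n => ?_⟩
    rw [map_smul, norm_smul, mul_assoc]
    exact mul_le_mul_of_nonneg_left (hC n) (norm_nonneg c)

lemma mem_growthSpace {A : Module.End 𝕜 V} {r : ℝ} {v : V} :
    v ∈ growthSpace A r ↔ ∃ C : ℝ, ∀ n : ℕ, ‖(A ^ n) v‖ ≤ C * r ^ n :=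
  Iff.rfl

lemma mem_growthSpace_of_sub_smul_apply_mem {A : Module.End 𝕜 V} {z : 𝕜} {r : ℝ} (hr : ‖z‖ < r)
    {v : V} (hv : (A - z • (1 : Module.End 𝕜 V)) v ∈ growthSpace A r) : v ∈ growthSpace A r := by
  obtain ⟨C, hC⟩ := hv
  have hr0 : 0 < r := (norm_nonneg z).trans_lt hr
  have hgap : 0 < r - ‖z‖ := sub_pos.2 hr
  set D := max ‖v‖ (C / (r - ‖z‖))
  have hCD : C ≤ D * (r - ‖z‖) := (div_le_iff₀ hgap).1 (le_max_right _ _)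
  refine ⟨D, fun n => ?_⟩
  induction n with
  | zero => simp [D]
  | succ n ih =>
    have hsucc : (A ^ (n + 1)) v =
        z • (A ^ n) v + (A ^ n) ((A - z • (1 : Module.End 𝕜 V)) v) := by
      rw [pow_succ, Module.End.mul_apply]
      simp
    calc ‖(A ^ (n + 1)) v‖
        ≤ ‖z‖ * ‖(A ^ n) v‖ + ‖(A ^ n) ((A - z • (1 : Module.End 𝕜 V)) v)‖ := by
          rw [hsucc, ← norm_smul]
          exact norm_add_le _ _
      _ ≤ ‖z‖ * (D * r ^ n) + D * (r - ‖z‖) * r ^ n := by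
          gcongr
          exact (hC n).trans (by gcongr)
      _ = D * r ^ (n + 1) := by ring

lemma maxGenEigenspace_le_growthSpace (A : Module.End 𝕜 V) {z : 𝕜} {r : ℝ} (hr : ‖z‖ < r) :
    A.maxGenEigenspace z ≤ growthSpace A r := by
  intro v hv
  obtain ⟨N, hN⟩ := (A.mem_maxGenEigenspace z v).1 hv
  clear hv
  induction N generalizing v with
  | zero =>
    rw [pow_zero, Module.End.one_apply] at hN
    exact hN ▸ zero_mem _
  | succ N ih =>
    refine mem_growthSpace_of_sub_smul_apply_mem hr (ih ?_)
    rwa [← Module.End.mul_apply, ← pow_succ]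

lemma exists_forall_norm_pow_apply_le {ι : Type*} [Finite ι] {A : Module.End 𝕜 V} {r : ℝ}
    (hr : 0 ≤ r) {v : ι → V} (hv : ∀ i, v i ∈ growthSpace A r) :
    ∃ C : ℝ, 0 ≤ C ∧ ∀ i n, ‖(A ^ n) (v i)‖ ≤ C * r ^ n := by
  choose C hC using fun i => mem_growthSpace.1 (hv i)
  obtain ⟨D, hD⟩ := Finite.exists_le C
  refine ⟨max D 0, le_max_right _ _, fun i n => (hC i n).trans ?_⟩
  gcongr
  exact (hD i).trans (le_max_left _ _)

end GrowthSpace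

lemma maxGenEigenspace_le_maxGenEigenspace_inv {K V : Type*} [Field K] [AddCommGroup V] [Module K V]
    {A B : Module.End K V} (hAB : A * B = 1) (hBA : B * A = 1) {z : K} (hz : z ≠ 0) :
    A.maxGenEigenspace z ≤ B.maxGenEigenspace z⁻¹ := by
  intro v hv
  obtain ⟨N, hN⟩ := (A.mem_maxGenEigenspace z v).1 hv
  refine (B.mem_maxGenEigenspace z⁻¹ v).2 ⟨N, ?_⟩
  have hsub : B - z⁻¹ • (1 : Module.End K V) =
      (-z⁻¹) • (B * (A - z • (1 : Module.End K V))) := by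
    rw [mul_sub, hBA, smul_sub, mul_smul_comm, mul_one, smul_smul, neg_mul, inv_mul_cancel₀ hz]
    simp [sub_eq_add_neg, add_comm]
  have hcomm : Commute B (A - z • (1 : Module.End K V)) :=
    Commute.sub_right (hBA.trans hAB.symm) ((Commute.one_right B).smul_right z)
  rw [hsub, _root_.smul_pow, hcomm.mul_pow, LinearMap.smul_apply, Module.End.mul_apply, hN,
    map_zero, smul_zero]

lemma exists_growthSpace_sup_growthSpace_eq_top {V : Type*} [NormedAddCommGroup V]
    [NormedSpace ℂ V] [FiniteDimensional ℂ V] {A B : Module.End ℂ V} (hAB : A * B = 1)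
    (hBA : B * A = 1) {r : ℝ} (hr : 1 < r) :
    ∃ θ : ℝ, 0 < θ ∧ θ < 1 ∧ growthSpace B θ ⊔ growthSpace A r = ⊤ := by
  have hrate (z : ℂ) : ∀ᶠ θ in nhdsWithin (1 : ℝ) (Set.Iio 1), 1 < ‖z‖ → ‖z⁻¹‖ < θ := by
    by_cases hz : 1 < ‖z‖
    · rw [norm_inv]
      filter_upwards [Ioo_mem_nhdsLT (inv_lt_one_of_one_lt₀ hz)] with θ hθ _ using hθ.1
    · exact Eventually.of_forall fun θ h => absurd h hz
  obtain ⟨θ, hθ, hθ0, hθ1⟩ := (((eventually_all_finite A.finite_hasEigenvalue).2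
    fun z _ => hrate z).and (Ioo_mem_nhdsLT zero_lt_one)).exists
  refine ⟨θ, hθ0, hθ1, top_le_iff.1 ?_⟩
  rw [← A.iSup_maxGenEigenspace_eq_top]
  refine iSup_le fun z => ?_
  rcases le_or_gt ‖z‖ 1 with hz | hz
  · exact (maxGenEigenspace_le_growthSpace A (hz.trans_lt hr)).trans le_sup_right
  by_cases hA : A.HasEigenvalue z
  · have hz0 : z ≠ 0 := norm_pos_iff.1 (zero_lt_one.trans hz)
    exact ((maxGenEigenspace_le_maxGenEigenspace_inv hAB hBA hz0).trans
      (maxGenEigenspace_le_growthSpace B (hθ z hA hz))).trans le_sup_left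
  · have hbot : A.maxGenEigenspace z = ⊥ :=
      not_not.1 fun h => hA (Module.End.HasUnifEigenvalue.lt zero_lt_one h)
    exact hbot.le.trans bot_le

lemma exists_aroots_one_lt_norm_of_monic {p : ℤ[X]} (hp : p.Monic) {z : ℂ} (hz : z ∈ p.aroots ℂ)
    (hz0 : z ≠ 0) (hroot : ∀ n : ℕ, n ≠ 0 → z ^ n ≠ 1) : ∃ w ∈ p.aroots ℂ, 1 < ‖w‖ := by
  by_contra! hle
  have hmahler : (p.map (Int.castRingHom ℂ)).mahlerMeasure = 1 := by
    rw [mahlerMeasure_eq_leadingCoeff_mul_prod_roots, (hp.map _).leadingCoeff, norm_one, one_mul]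
    refine Multiset.prod_eq_one fun a ha => ?_
    obtain ⟨w, hw, rfl⟩ := Multiset.mem_map.1 ha
    exact max_eq_left (hle w hw)
  obtain ⟨n, hn, hzn⟩ := pow_eq_one_of_mahlerMeasure_eq_one hmahler hz0 hz
  exact hroot n hn.ne' hzn

lemma aeval_ne_zero_of_abs_coeff_le_one {p : ℤ[X]} (hp : p ≠ 0) (hcoeff : ∀ n, |p.coeff n| ≤ 1)
    {z : ℂ} (hz : 2 ≤ ‖z‖) : aeval z p ≠ 0 := by
  intro h
  set q := p.map (Int.castRingHom ℂ)
  have hq : q ≠ 0 := (Polynomial.map_ne_zero_iff (RingHom.injective_int _)).2 hp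
  have hroot : q.IsRoot z := by
    rw [IsRoot, eval_map]
    simpa [aeval_def] using h
  have hnorm (n : ℕ) : ‖q.coeff n‖₊ ≤ 1 := by
    rw [← NNReal.coe_le_coe, coe_nnnorm, coeff_map, eq_intCast, Complex.norm_intCast,
      NNReal.coe_one]
    exact_mod_cast hcoeff n
  have hlead : ‖q.leadingCoeff‖₊ = 1 := by
    refine le_antisymm (hnorm _) ?_
    rw [leadingCoeff_map_of_injective (RingHom.injective_int _), ← NNReal.coe_le_coe, coe_nnnorm,
      eq_intCast, Complex.norm_intCast, NNReal.coe_one]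
    exact_mod_cast Int.one_le_abs (leadingCoeff_ne_zero.2 hp)
  have hbound : cauchyBound q ≤ 2 := by
    rw [cauchyBound, hlead, div_one, ← one_add_one_eq_two]
    gcongr
    exact Finset.sup_le fun n _ => hnorm n
  have hlt : ‖z‖₊ < 2 := (hroot.norm_lt_cauchyBound hq).trans_le hbound
  exact hz.not_gt hlt

section Charpoly

variable {n : Type*} [Fintype n] [DecidableEq n]

lemma exists_common_root_charpoly_of_vecMul_aeval_eq_zero {K : Type*} [Field K] [IsAlgClosed K]
    {M : Matrix n n K} {v : n → K} (hv : v ≠ 0) {p : K[X]}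
    (hp : Matrix.vecMul v (aeval M p) = 0) : ∃ z, M.charpoly.IsRoot z ∧ p.IsRoot z := by
  by_contra! hroot
  obtain ⟨a, b, hab⟩ : IsCoprime p M.charpoly := by
    rw [isCoprime_iff_aeval_ne_zero_of_isAlgClosed K K]
    intro z
    simpa [IsRoot, or_iff_not_imp_right] using hroot z
  have hone : aeval M p * aeval M a = 1 := by
    simpa [Matrix.aeval_self_charpoly, mul_comm a] using congrArg (aeval M) hab
  apply hv
  rw [← Matrix.vecMul_one v, ← hone, ← Matrix.vecMul_vecMul, hp, Matrix.zero_vecMul]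

lemma exists_common_root_charpoly_of_vecMul_aeval_eq_zero_int {M : Matrix n n ℤ} {v : n → ℤ}
    (hv : v ≠ 0) {p : ℤ[X]} (hp : Matrix.vecMul v (aeval M p) = 0) :
    ∃ z : ℂ, aeval z M.charpoly = 0 ∧ aeval z p = 0 := by
  have hvℂ : (fun i => (v i : ℂ)) ≠ 0 := fun h => hv (funext fun i => by simpa using congrFun h i)
  have haeval : aeval (M.map (Int.castRingHom ℂ)) (p.map (Int.castRingHom ℂ)) =
      (aeval M p).map (Int.castRingHom ℂ) := by
    rw [← algebraMap_int_eq ℂ, aeval_map_algebraMap]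
    exact aeval_algHom_apply ((Int.castRingHom ℂ).mapMatrix (m := n)).toIntAlgHom M p
  have hpℂ : Matrix.vecMul (fun i => (v i : ℂ))
      (aeval (M.map (Int.castRingHom ℂ)) (p.map (Int.castRingHom ℂ))) = 0 := by
    rw [haeval]
    ext i
    simpa [Matrix.vecMul, dotProduct] using congrArg (Int.cast (R := ℂ)) (congrFun hp i)
  obtain ⟨z, hzM, hzp⟩ := exists_common_root_charpoly_of_vecMul_aeval_eq_zero hvℂ hpℂ
  rw [Matrix.charpoly_map] at hzM
  rw [IsRoot, eval_map] at hzM hzp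
  exact ⟨z, hzM, hzp⟩

lemma ne_zero_of_aeval_charpoly_eq_zero {M : Matrix n n ℤ} (hM : IsUnit M.det) {z : ℂ}
    (hz : aeval z M.charpoly = 0) : z ≠ 0 := by
  rintro rfl
  rw [← coeff_zero_eq_aeval_zero', algebraMap_int_eq, eq_intCast, Int.cast_eq_zero] at hz
  rw [Matrix.det_eq_sign_charpoly_coeff, hz, mul_zero] at hM
  exact not_isUnit_zero hM

end Charpoly

lemma pow_ne_one_of_noRootOfUnityEigenvalue {d : ℕ} {S : Matrix (Fin d) (Fin d) ℤ}
    (hEig : NoRootOfUnityEigenvalue S) {z : ℂ} (hz : aeval z S.charpoly = 0) (n : ℕ) (hn : n ≠ 0) :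
    z ^ n ≠ 1 := by
  refine hEig z ?_ n hn
  rw [show S.map (fun a => (a : ℂ)) = S.map (Int.castRingHom ℂ) from rfl, Matrix.charpoly_map,
    IsRoot, eval_map]
  exact hz

lemma exists_unstable_root_of_vecMul_aeval_eq_zero {d : ℕ} {S : Matrix (Fin d) (Fin d) ℤ}
    (hS : IsUnit S.det) (hEig : NoRootOfUnityEigenvalue S) {k : Fin d → ℤ} (hk : k ≠ 0)
    {p : ℤ[X]} (hp : Matrix.vecMul k (aeval S p) = 0) :
    ∃ w : ℂ, 1 < ‖w‖ ∧ aeval w S.charpoly = 0 ∧ aeval w p = 0 := by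
  obtain ⟨z, hzS, hzp⟩ := exists_common_root_charpoly_of_vecMul_aeval_eq_zero_int hk hp
  have hzint : IsIntegral ℤ z := ⟨S.charpoly, S.charpoly_monic, hzS⟩
  have hzmin : z ∈ (minpoly ℤ z).aroots ℂ :=
    mem_aroots.2 ⟨minpoly.ne_zero hzint, minpoly.aeval ℤ z⟩
  obtain ⟨w, hw, hw1⟩ := exists_aroots_one_lt_norm_of_monic (minpoly.monic hzint) hzmin
    (ne_zero_of_aeval_charpoly_eq_zero hS hzS) (pow_ne_one_of_noRootOfUnityEigenvalue hEig hzS)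
  have hwdvd {q : ℤ[X]} (hq : aeval z q = 0) : aeval w q = 0 :=
    aeval_eq_zero_of_dvd_aeval_eq_zero (minpoly.isIntegrallyClosed_dvd hzint hq)
      (mem_aroots.1 hw).2
  exact ⟨w, hw1, hwdvd hzS, hwdvd hzp⟩

lemma exists_forall_root_two_le_norm_pow {p : ℤ[X]} (hp : p ≠ 0) :
    ∃ m > 0, ∀ w : ℂ, 1 < ‖w‖ → aeval w p = 0 → 2 ≤ ‖w ^ m‖ := by
  have hroots : {w : ℂ | aeval w p = 0}.Finite :=
    (p.rootSet_finite ℂ).subset fun w hw => mem_rootSet.2 ⟨hp, hw⟩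
  have hpow (w : ℂ) : ∀ᶠ m : ℕ in atTop, 1 < ‖w‖ → 2 ≤ ‖w ^ m‖ := by
    by_cases hw : 1 < ‖w‖
    · filter_upwards [(tendsto_pow_atTop_atTop_of_one_lt hw).eventually_ge_atTop 2] with m hm _
      rwa [norm_pow]
    · exact Eventually.of_forall fun m h => absurd h hw
  obtain ⟨m, hm, hm0⟩ := (((eventually_all_finite hroots).2 fun w _ => hpow w).and
    (eventually_gt_atTop 0)).exists
  exact ⟨m, hm0, fun w hw hwp => hm w hwp hw⟩

end LinearAlgebra


section Diophantine

open Polynomial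

section Pairing

variable {n : Type*} [Fintype n]

/-- The endomorphism of `ℂⁿ` given by an integer matrix, as a ring homomorphism. -/
def intEnd [DecidableEq n] : Matrix n n ℤ →+* Module.End ℂ (n → ℂ) :=
  (Matrix.toLinAlgEquiv' : Matrix n n ℂ ≃ₐ[ℂ] Module.End ℂ (n → ℂ)).toRingEquiv.toRingHom.comp
    (Int.castRingHom ℂ).mapMatrix

/-- The linear form `v ↦ ∑ i, k i * v i` on `ℂⁿ` given by an integer vector `k`. -/
def pairing (k : n → ℤ) : (n → ℂ) →ₗ[ℂ] ℂ :=
  ∑ i, (k i : ℂ) • LinearMap.proj i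

lemma intEnd_apply [DecidableEq n] (M : Matrix n n ℤ) (v : n → ℂ) (i : n) :
    intEnd M v i = ∑ j, (M i j : ℂ) * v j :=
  rfl

lemma pairing_apply (k : n → ℤ) (v : n → ℂ) : pairing k v = ∑ i, (k i : ℂ) * v i := by
  simp [pairing]

lemma pairing_single [DecidableEq n] (k : n → ℤ) (i : n) : pairing k (Pi.single i 1) = k i := by
  simp [pairing_apply, Pi.single_apply]

lemma pairing_vecMul [DecidableEq n] (k : n → ℤ) (M : Matrix n n ℤ) (v : n → ℂ) :
    pairing (Matrix.vecMul k M) v = pairing k (intEnd M v) := by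
  simp only [pairing_apply, intEnd_apply, Matrix.vecMul, dotProduct, Int.cast_sum, Int.cast_mul,
    Finset.sum_mul, Finset.mul_sum, mul_assoc]
  exact Finset.sum_comm

lemma norm_pairing_le {k : n → ℤ} {R : ℝ} (hk : ∀ i, |(k i : ℝ)| ≤ R) (v : n → ℂ) :
    ‖pairing k v‖ ≤ Fintype.card n * (R * ‖v‖) := by
  rw [pairing_apply, ← nsmul_eq_mul, ← Finset.card_univ]
  refine (norm_sum_le _ _).trans (Finset.sum_le_card_nsmul _ _ _ fun i _ => ?_)
  rw [norm_mul, Complex.norm_intCast]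
  exact mul_le_mul (hk i) (norm_le_pi_norm v i) (norm_nonneg _) ((abs_nonneg _).trans (hk i))

lemma re_pairing (k : n → ℤ) (v : n → ℂ) : (pairing k v).re = ∑ i, (k i : ℝ) * (v i).re := by
  simp [pairing_apply]

lemma re_intEnd_apply [DecidableEq n] (M : Matrix n n ℤ) (v : n → ℂ) (i : n) :
    (intEnd M v i).re = (M.map (Int.castRingHom ℝ)).mulVec (fun j => (v j).re) i := by
  simp [intEnd_apply, Matrix.mulVec, dotProduct]

/-- The coefficients come from Siegel's lemma applied to the vectors `k * M ^ j`, `j < L`. -/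
lemma exists_polynomial_abs_coeff_le_one_vecMul_aeval_eq_zero [DecidableEq n] [Nonempty n]
    {M : Matrix n n ℤ} {k : n → ℤ} {L : ℕ} {B : ℝ} (hB : 1 ≤ B) (hL : Fintype.card n < L)
    (hLB : (L * B) ^ Fintype.card n < 2 ^ (L - Fintype.card n))
    (hM : ∀ j < L, ∀ i, |((Matrix.vecMul k (M ^ j) i : ℤ) : ℝ)| ≤ B) :
    ∃ p : ℤ[X], p ≠ 0 ∧ (∀ j, |p.coeff j| ≤ 1) ∧ Matrix.vecMul k (aeval M p) = 0 := by
  let Q : Matrix n (Fin L) ℤ := fun i j => Matrix.vecMul k (M ^ (j : ℕ)) i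
  obtain ⟨t, ht0, hQt, ht⟩ := Int.Matrix.exists_ne_zero_int_vec_norm_le Q
    (by rwa [Fintype.card_fin]) Fintype.card_pos
  have ht2 : ‖t‖ < 2 := by
    have hcast : ((L - Fintype.card n : ℕ) : ℝ) = L - Fintype.card n := Nat.cast_sub hL.le
    have hpos : (0 : ℝ) < (L : ℝ) - Fintype.card n := sub_pos.2 (Nat.cast_lt.2 hL)
    have hQ : max 1 (Matrix.seminormedAddCommGroup.norm Q) ≤ B :=
      max_le hB ((Matrix.norm_le_iff (zero_le_one.trans hB)).2 fun i j => hM j j.2 i)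
    rw [Fintype.card_fin] at ht
    calc ‖t‖ ≤ (L * B) ^ ((Fintype.card n : ℝ) / (L - Fintype.card n)) :=
          ht.trans (by gcongr)
      _ = ((L * B) ^ Fintype.card n) ^ ((L : ℝ) - Fintype.card n)⁻¹ := by
          rw [div_eq_mul_inv, Real.rpow_mul (by positivity), Real.rpow_natCast]
      _ < (2 ^ (L - Fintype.card n)) ^ ((L : ℝ) - Fintype.card n)⁻¹ := by gcongr
      _ = 2 := by
          rw [← Real.rpow_natCast, hcast, ← Real.rpow_mul zero_le_two, mul_inv_cancel₀ hpos.ne',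
            Real.rpow_one]
  refine ⟨ofFn L t, fun h => ht0 (injective_ofFn L (h.trans (ofFn_zero L).symm)), fun j => ?_, ?_⟩
  · rcases lt_or_ge j L with hj | hj
    · rw [ofFn_coeff_eq_val_of_lt t hj]
      have hlt : ((|t ⟨j, hj⟩| : ℤ) : ℝ) < 2 := by
        rw [Int.cast_abs]
        exact (norm_le_pi_norm t ⟨j, hj⟩).trans_lt ht2
      exact Int.lt_add_one_iff.1 (by exact_mod_cast hlt)
    · simp [ofFn_coeff_eq_zero_of_ge t hj]
  · ext i
    rw [ofFn_eq_sum_monomial, map_sum, ← congrFun hQt i, Matrix.vecMul_sum, Finset.sum_apply]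
    simp only [aeval_monomial, ← Algebra.smul_def, Matrix.vecMul_smul, Pi.smul_apply, smul_eq_mul,
      Matrix.mulVec, dotProduct, Q, mul_comm]

end Pairing

lemma exists_siegel_bound (d : ℕ) {τ D : ℝ} (hτ : 1 < τ) (hτ2 : τ ^ (4 * (d + 1)) = 2)
    (hD : 0 ≤ D) :
    ∃ κ : ℕ, ∀ J L : ℕ, L = κ * (J + 1) →
      d < L ∧ (L * (1 + D * (2 ^ J * τ ^ L))) ^ d < 2 ^ (L - d) := by
  have hlim : Tendsto (fun n : ℕ => (n : ℝ) ^ 1 / τ ^ n) atTop (nhds 0) :=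
    tendsto_pow_const_div_const_pow_of_one_lt 1 hτ
  obtain ⟨L₀, hL₀⟩ := eventually_atTop.1
    (hlim.eventually_le_const (by positivity : 0 < 1 / (1 + D)))
  refine ⟨max L₀ (4 * (d + 1)), fun J L hL => ?_⟩
  have hL₀L : L₀ ≤ L := hL ▸ (le_max_left _ _).trans (Nat.le_mul_of_pos_right _ J.succ_pos)
  have hdJL : 4 * (d + 1) * (J + 1) ≤ L := hL ▸ Nat.mul_le_mul_right _ (le_max_right _ _)
  have hdL : 4 * (d + 1) ≤ L := (Nat.le_mul_of_pos_right _ J.succ_pos).trans hdJL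
  have hτL : 0 < τ ^ L := by positivity
  have h2J : (2 : ℝ) ^ J ≤ τ ^ L := by
    rw [← hτ2, ← pow_mul]
    exact pow_le_pow_right₀ hτ.le ((Nat.mul_le_mul_left _ J.le_succ).trans hdJL)
  have hone : 1 ≤ 2 ^ J * τ ^ L :=
    one_le_mul_of_one_le_of_one_le (one_le_pow₀ one_le_two) (one_le_pow₀ hτ.le)
  have hlin : L * (1 + D) ≤ τ ^ L := by
    have := hL₀ L hL₀L
    rwa [pow_one, div_le_div_iff₀ hτL (by positivity), one_mul] at this
  have hentries : L * (1 + D * (2 ^ J * τ ^ L)) ≤ τ ^ (3 * L) := by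
    calc L * (1 + D * (2 ^ J * τ ^ L))
        ≤ L * ((1 + D) * (2 ^ J * τ ^ L)) := by
          gcongr
          linarith
      _ = L * (1 + D) * (2 ^ J * τ ^ L) := by ring
      _ ≤ τ ^ L * (τ ^ L * τ ^ L) := by gcongr
      _ = τ ^ (3 * L) := by ring
  refine ⟨by omega, ?_⟩
  calc (L * (1 + D * (2 ^ J * τ ^ L))) ^ d
      ≤ (τ ^ (3 * L)) ^ d := by gcongr
    _ = τ ^ (3 * L * d) := (pow_mul _ _ _).symm
    _ < τ ^ (4 * (d + 1) * (L - d)) := by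
        refine pow_lt_pow_right₀ hτ ?_
        zify [(by omega : d ≤ L)] at hdL ⊢
        nlinarith [mul_le_mul_of_nonneg_left hdL (Int.natCast_nonneg d)]
    _ = 2 ^ (L - d) := by rw [pow_mul, hτ2]

variable {d : ℕ} {S : Matrix (Fin d) (Fin d) ℤ}

/-- A small orbit would be annihilated by a polynomial in `S ^ m` with coefficients in `{-1, 0, 1}`,
which by hypothesis on `m` cannot vanish at the unstable eigenvalues of `S`. -/
lemma exists_lt_abs_vecMul_pow (hS : IsUnit S.det) (hEig : NoRootOfUnityEigenvalue S) {m : ℕ}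
    (hm : ∀ w : ℂ, 1 < ‖w‖ → aeval w S.charpoly = 0 → 2 ≤ ‖w ^ m‖) {k : Fin d → ℤ} (hk : k ≠ 0)
    {L : ℕ} {B : ℝ} (hB : 1 ≤ B) (hL : d < L) (hLB : (L * B) ^ d < 2 ^ (L - d)) :
    ∃ j < L, ∃ i, B < |((Matrix.vecMul k (S ^ (m * j)) i : ℤ) : ℝ)| := by
  by_contra! hle
  obtain ⟨i, -⟩ := Function.ne_iff.1 hk
  have : Nonempty (Fin d) := ⟨i⟩
  obtain ⟨p, hp0, hp1, hkp⟩ := exists_polynomial_abs_coeff_le_one_vecMul_aeval_eq_zero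
    (M := S ^ m) (k := k) hB (by rwa [Fintype.card_fin]) (by rwa [Fintype.card_fin])
    (by simpa only [← pow_mul] using hle)
  rw [← expand_aeval] at hkp
  obtain ⟨w, hw, hwS, hwp⟩ := exists_unstable_root_of_vecMul_aeval_eq_zero hS hEig hk hkp
  rw [expand_aeval] at hwp
  exact aeval_ne_zero_of_abs_coeff_le_one hp0 hp1 (hm w hw hwS) hwp

lemma exists_unstable_add_centerStable_eq_single (hS : IsUnit S.det) {r : ℝ} (hr : 1 < r) :
    ∃ (u c : Fin d → Fin d → ℂ) (θ : ℝ), 0 < θ ∧ θ < 1 ∧ (∀ i, u i + c i = Pi.single i 1) ∧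
      (∀ i, u i ∈ growthSpace (intEnd S⁻¹) θ) ∧ ∀ i, c i ∈ growthSpace (intEnd S) r := by
  obtain ⟨θ, hθ0, hθ1, htop⟩ := exists_growthSpace_sup_growthSpace_eq_top
    (A := intEnd S) (B := intEnd S⁻¹) (by rw [← map_mul, S.mul_nonsing_inv hS, map_one])
    (by rw [← map_mul, S.nonsing_inv_mul hS, map_one]) hr
  have hsplit (i : Fin d) :=
    Submodule.mem_sup.1 (htop ▸ Submodule.mem_top (x := Pi.single i (1 : ℂ)))
  choose u hu c hc huc using hsplit
  exact ⟨u, c, θ, hθ0, hθ1, huc, hu, hc⟩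

lemma exists_unstable_pairing_ge_one (hS : IsUnit S.det) (hEig : NoRootOfUnityEigenvalue S) :
    ∃ (u : Fin d → Fin d → ℂ) (θ : ℝ) (κ : ℕ), 0 < θ ∧ θ < 1 ∧
      (∀ i, u i ∈ growthSpace (intEnd S⁻¹) θ) ∧
      ∀ (J : ℕ) (k : Fin d → ℤ), k ≠ 0 → (∀ i, |(k i : ℝ)| ≤ 2 ^ J) →
        ∃ j < κ * (J + 1), ∃ i, 1 ≤ ‖pairing k (intEnd (S ^ j) (u i))‖ := by
  obtain ⟨m, hm0, hm⟩ := exists_forall_root_two_le_norm_pow S.charpoly_monic.ne_zero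
  have hN : m * (4 * (d + 1)) ≠ 0 := by positivity
  set r : ℝ := 2 ^ ((m * (4 * (d + 1)) : ℕ) : ℝ)⁻¹
  have hr1 : 1 < r := Real.one_lt_rpow one_lt_two (by positivity)
  have hr2 : (r ^ m) ^ (4 * (d + 1)) = 2 := by
    rw [← pow_mul, Real.rpow_inv_natCast_pow zero_le_two hN]
  obtain ⟨u, c, θ, hθ0, hθ1, huc, hu, hc⟩ := exists_unstable_add_centerStable_eq_single hS hr1
  obtain ⟨D, hD0, hD⟩ := exists_forall_norm_pow_apply_le (zero_le_one.trans hr1.le) hc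
  obtain ⟨κ, hκ⟩ := exists_siegel_bound d (one_lt_pow₀ hr1 hm0.ne') hr2
    (by positivity : 0 ≤ d * D)
  refine ⟨u, θ, m * κ, hθ0, hθ1, hu, fun J k hk hkJ => ?_⟩
  by_contra! hsmall
  set L := κ * (J + 1) with hL
  obtain ⟨hdL, hLd⟩ := hκ J L hL
  obtain ⟨j, hjL, i, hji⟩ := exists_lt_abs_vecMul_pow hS hEig hm hk
    (le_add_of_nonneg_right (by positivity)) hdL hLd
  refine hji.not_ge ?_
  have hcenter : ‖pairing k (intEnd (S ^ (m * j)) (c i))‖ ≤ d * D * (2 ^ J * (r ^ m) ^ L) := by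
    refine (norm_pairing_le hkJ _).trans ?_
    rw [Fintype.card_fin, map_pow, mul_assoc (d : ℝ), mul_left_comm D]
    gcongr
    refine (hD i (m * j)).trans ?_
    rw [← pow_mul]
    gcongr
    exact hr1.le
  calc |((Matrix.vecMul k (S ^ (m * j)) i : ℤ) : ℝ)|
      = ‖pairing k (intEnd (S ^ (m * j)) (u i)) + pairing k (intEnd (S ^ (m * j)) (c i))‖ := by
        rw [← Complex.norm_intCast, ← pairing_single, ← huc, pairing_vecMul, map_add, map_add]
    _ ≤ 1 + d * D * (2 ^ J * (r ^ m) ^ L) := by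
        refine (norm_add_le _ _).trans (add_le_add (hsmall (m * j) ?_ i).le hcenter)
        rw [mul_assoc]
        gcongr

/-- Scaling the unstable vector by `(2 q)⁻¹`, where `q` is its pairing with `k`, makes the pairing
equal to `1 / 2`, that is, makes the character of index `k * S ^ p` equal to `-1` there. -/
lemma exists_real_vecMul_pow_eq_half (hS : IsUnit S.det) {k : Fin d → ℤ} {j p : ℕ} (hjp : j ≤ p)
    {u : Fin d → ℂ} (hu : 1 ≤ ‖pairing k (intEnd (S ^ j) u)‖) :
    ∃ v : Fin d → ℝ, ∑ i, ((Matrix.vecMul k (S ^ p) i : ℤ) : ℝ) * v i = 1 / 2 ∧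
      ∀ l i, |((S⁻¹ ^ l).map (Int.castRingHom ℝ)).mulVec v i| ≤
        ‖(intEnd S⁻¹ ^ (l + (p - j))) u‖ := by
  set q := pairing k (intEnd (S ^ j) u)
  have hq : q ≠ 0 := norm_pos_iff.1 (zero_lt_one.trans_le hu)
  have hζ : ‖(2 * q)⁻¹‖ ≤ 1 := by
    rw [norm_inv, norm_mul, Complex.norm_two]
    exact inv_le_one_of_one_le₀ (by linarith)
  set x : Fin d → ℂ := (2 * q)⁻¹ • intEnd (S⁻¹ ^ (p - j)) u
  have hpow : S ^ p * S⁻¹ ^ (p - j) = S ^ j := by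
    rw [Matrix.inv_pow', ← Matrix.pow_sub' S hS (Nat.sub_le p j), Nat.sub_sub_self hjp]
  refine ⟨fun i => (x i).re, ?_, fun l i => ?_⟩
  · rw [← re_pairing, pairing_vecMul, map_smul, map_smul, ← Module.End.mul_apply, ← map_mul, hpow,
      smul_eq_mul, mul_inv, mul_assoc, inv_mul_cancel₀ hq]
    norm_num
  · rw [← re_intEnd_apply, map_smul, ← Module.End.mul_apply, ← map_mul, ← pow_add, map_pow]
    refine (Complex.abs_re_le_norm _).trans ((norm_le_pi_norm _ i).trans ?_)
    rw [norm_smul]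
    exact mul_le_of_le_one_left (norm_nonneg _) hζ

lemma exists_unstable_half_vector (hS : IsUnit S.det) (hEig : NoRootOfUnityEigenvalue S) :
    ∃ (θ C : ℝ) (κ : ℕ), 0 < θ ∧ θ < 1 ∧ 0 ≤ C ∧
      ∀ (J : ℕ) (k : Fin d → ℤ), k ≠ 0 → (∀ i, |(k i : ℝ)| ≤ 2 ^ J) → ∀ p ≥ κ * (J + 1),
        ∃ v : Fin d → ℝ, ∑ i, ((Matrix.vecMul k (S ^ p) i : ℤ) : ℝ) * v i = 1 / 2 ∧
          ∀ l i, |((S⁻¹ ^ l).map (Int.castRingHom ℝ)).mulVec v i| ≤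
            C * θ ^ (p - κ * (J + 1)) := by
  obtain ⟨u, θ, κ, hθ0, hθ1, hu, hpair⟩ := exists_unstable_pairing_ge_one hS hEig
  obtain ⟨C, hC0, hC⟩ := exists_forall_norm_pow_apply_le hθ0.le hu
  refine ⟨θ, C, κ, hθ0, hθ1, hC0, fun J k hk hkJ p hp => ?_⟩
  obtain ⟨j, hj, i, hi⟩ := hpair J k hk hkJ
  obtain ⟨v, hv, hvS⟩ := exists_real_vecMul_pow_eq_half hS (hj.le.trans hp) hi
  refine ⟨v, hv, fun l a => (hvS l a).trans ((hC i _).trans ?_)⟩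
  gcongr C * ?_
  exact pow_le_pow_of_le_one hθ0.le hθ1.le (by omega)

end Diophantine

section Characters

open UnitAddTorus

variable {ι : Type*} [Fintype ι] {k : ι → ℤ}

/-- The projection `ℝ^ι → ℝ^ι/ℤ^ι`. -/
def toTorus (v : ι → ℝ) : UnitAddTorus ι := fun i => (v i : AddCircle (1 : ℝ))

lemma norm_toTorus_le {v : ι → ℝ} {r : ℝ} (hr : 0 ≤ r) (hv : ∀ i, |v i| ≤ r) :
    ‖toTorus v‖ ≤ r :=
  (pi_norm_le_iff_of_nonneg hr).2 fun i => QuotientAddGroup.norm_mk_le_norm.trans (hv i)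

lemma fourier_apply_add (n : ℤ) (x y : UnitAddCircle) :
    fourier n (x + y) = fourier n x * (fourier n y : ℂ) := by
  simp only [fourier_apply, smul_add, AddCircle.toCircle_add, Circle.coe_mul]

lemma fourier_apply_sum {κ : Type*} (s : Finset κ) (n : ℤ) (x : κ → UnitAddCircle) :
    fourier n (∑ j ∈ s, x j) = ∏ j ∈ s, (fourier n (x j) : ℂ) := by
  classical
  induction s using Finset.induction_on with
  | empty => simp
  | insert a s ha ih => rw [Finset.sum_insert ha, Finset.prod_insert ha, ← ih, fourier_apply_add]

lemma fourier_sum_apply {κ : Type*} (s : Finset κ) (n : κ → ℤ) (x : UnitAddCircle) :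
    fourier (∑ j ∈ s, n j) x = ∏ j ∈ s, (fourier (n j) x : ℂ) := by
  classical
  induction s using Finset.induction_on with
  | empty => simp
  | insert a s ha ih => rw [Finset.sum_insert ha, Finset.prod_insert ha, ← ih, fourier_add]

lemma fourier_apply_zsmul (m n : ℤ) (x : UnitAddCircle) :
    (fourier m (n • x) : ℂ) = fourier (m * n) x := by
  simp only [fourier_apply, mul_smul]

lemma norm_mFourier_apply (k : ι → ℤ) (x : UnitAddTorus ι) : ‖mFourier k x‖ = 1 := by
  simp only [mFourier, fourier_apply, ContinuousMap.coe_mk, norm_prod, Circle.norm_coe,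
    Finset.prod_const_one]

lemma mFourier_apply_add (k : ι → ℤ) (x y : UnitAddTorus ι) :
    mFourier k (x + y) = mFourier k x * mFourier k y := by
  simp only [mFourier, ContinuousMap.coe_mk, ← Finset.prod_mul_distrib, Pi.add_apply,
    fourier_apply_add]

lemma mFourier_toTorus (k : ι → ℤ) (v : ι → ℝ) :
    mFourier k (toTorus v) =
      Complex.exp (2 * Real.pi * Complex.I * (∑ i, (k i : ℝ) * v i : ℝ)) := by
  simp only [mFourier, ContinuousMap.coe_mk, toTorus, fourier_coe_apply]
  rw [← Complex.exp_sum]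
  push_cast
  rw [Finset.mul_sum]
  congr 1
  refine Finset.sum_congr rfl fun i _ => ?_
  ring

lemma mFourier_toTorus_eq_neg_one {v : ι → ℝ} (h : ∑ i, (k i : ℝ) * v i = 1 / 2) :
    mFourier k (toTorus v) = -1 := by
  rw [mFourier_toTorus, h, ← Complex.exp_pi_mul_I]
  congr 1
  push_cast
  ring

lemma two_le_sq_norm_exp_sub_one {t : ℝ} (h1 : 1 / 4 ≤ |t|) (h2 : |t| ≤ 1 / 2) :
    2 ≤ ‖Complex.exp (2 * Real.pi * Complex.I * t) - 1‖ ^ 2 := by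
  have hpi := Real.pi_pos
  have hcos : Real.cos (2 * Real.pi * t) ≤ 0 := by
    rw [← Real.cos_abs, abs_mul, abs_of_pos (by positivity : 0 < 2 * Real.pi)]
    exact Real.cos_nonpos_of_pi_div_two_le_of_le (by nlinarith) (by nlinarith)
  have harg : (2 * Real.pi * Complex.I * t : ℂ) = ((2 * Real.pi * t : ℝ) : ℂ) * Complex.I := by
    push_cast; ring
  rw [harg, ← Complex.normSq_eq_norm_sq, Complex.normSq_apply]
  simp only [Complex.sub_re, Complex.sub_im, Complex.exp_ofReal_mul_I_re,
    Complex.exp_ofReal_mul_I_im, Complex.one_re, Complex.one_im]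
  nlinarith [Real.sin_sq_add_cos_sq (2 * Real.pi * t)]

lemma two_le_sq_norm_mFourier_single_sub_one [DecidableEq ι] {i : ι} {j : ℕ}
    (h1 : 2 ^ j ≤ |k i|) (h2 : |k i| ≤ 2 ^ (j + 1)) :
    2 ≤ ‖mFourier k (toTorus (Pi.single i ((1 / 2) ^ (j + 2)))) - 1‖ ^ 2 := by
  have h1' : (2 : ℝ) ^ j ≤ |(k i : ℝ)| := by exact_mod_cast h1
  have h2' : |(k i : ℝ)| ≤ (2 : ℝ) ^ j * 2 := by rw [← pow_succ]; exact_mod_cast h2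
  have habs : |∑ a, (k a : ℝ) * (Pi.single i ((1 / 2) ^ (j + 2)) : ι → ℝ) a| =
      |(k i : ℝ)| / (4 * 2 ^ j) := by
    rw [Finset.sum_eq_single i (fun b _ hb => by simp [hb]) (by simp), Pi.single_eq_same, abs_mul,
      abs_of_pos (by positivity : (0 : ℝ) < (1 / 2) ^ (j + 2)), one_div, inv_pow, pow_add,
      div_eq_mul_inv]
    ring
  rw [mFourier_toTorus]
  refine two_le_sq_norm_exp_sub_one ?_ ?_
  · rw [habs, le_div_iff₀ (by positivity)]; linarith
  · rw [habs, div_le_iff₀ (by positivity)]; linarith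

end Characters

section FourierCoefficients

open UnitAddTorus

variable {ι : Type*} [Fintype ι] {E : Type*} [NormedAddCommGroup E]

lemma integrable_of_continuous {X : Type*} [TopologicalSpace X] [CompactSpace X]
    [MeasurableSpace X] [OpensMeasurableSpace X] {μ : Measure X} [IsFiniteMeasureOnCompacts μ]
    {G : X → E} (hG : Continuous G) : Integrable G μ :=
  hG.integrable_of_hasCompactSupport (HasCompactSupport.of_compactSpace _)

instance isProbabilityMeasure_volume :
    IsProbabilityMeasure (volume : Measure (UnitAddTorus ι)) := by
  have : IsProbabilityMeasure (volume : Measure UnitAddCircle) := ⟨by simp⟩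
  infer_instance

-- Mathlib's `mFourierCoeff` integrates against a `volume` built from `haarAddCircle`, which is
-- equal but not syntactically identical to the global one.
lemma volume_eq_pi_haarAddCircle :
    (volume : Measure (UnitAddTorus ι)) = Measure.pi fun _ => AddCircle.haarAddCircle := by
  rw [volume_pi]
  congr 1
  ext1 _
  rw [AddCircle.volume_eq_smul_haarAddCircle, ENNReal.ofReal_one, one_smul]

lemma hasSum_sq_norm_mFourierCoeff {H : UnitAddTorus ι → ℂ} (hH : Continuous H) :
    HasSum (fun k => ‖mFourierCoeff H k‖ ^ 2) (∫ x, ‖H x‖ ^ 2) := by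
  rw [volume_eq_pi_haarAddCircle]
  let F : C(UnitAddTorus ι, ℂ) := ⟨H, hH⟩
  have hparseval :=
    hasSum_sq_mFourierCoeff (F.toLp 2 (Measure.pi fun _ => AddCircle.haarAddCircle) ℂ)
  have hcoeff := mFourierCoeff_toLp F
  have hint : ∫ x, ‖F.toLp 2 (Measure.pi fun _ => AddCircle.haarAddCircle) ℂ x‖ ^ 2
      ∂(Measure.pi fun _ => AddCircle.haarAddCircle) =
      ∫ x, ‖H x‖ ^ 2 ∂(Measure.pi fun _ => AddCircle.haarAddCircle) := by
    refine integral_congr_ae ?_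
    filter_upwards [F.coeFn_toLp (p := 2) (𝕜 := ℂ) (Measure.pi fun _ => AddCircle.haarAddCircle)]
      with x hx
    rw [hx, ContinuousMap.coe_mk]
  rw [← hint]
  exact hparseval.congr_fun fun k => congr_arg (‖·‖ ^ 2) (hcoeff k).symm

lemma mFourierCoeff_mFourier (k l : ι → ℤ) :
    mFourierCoeff (mFourier l) k = if k = l then (1 : ℂ) else 0 := by
  classical
  have hrepr : mFourierBasis.repr (mFourierLp 2 l) k = mFourierCoeff (mFourier l) k :=
    (mFourierBasis_repr _ _).trans (mFourierCoeff_toLp _ _)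
  rw [← hrepr, ← coe_mFourierBasis, HilbertBasis.repr_self, lp.single_apply, Pi.single_apply]

variable [NormedSpace ℂ E]

lemma mFourierCoeff_eq_integral_volume (G : UnitAddTorus ι → E) (k : ι → ℤ) :
    mFourierCoeff G k = ∫ x, mFourier (-k) x • G x := by
  rw [volume_eq_pi_haarAddCircle]
  rfl

lemma integral_mFourier_smul (G : UnitAddTorus ι → E) (k : ι → ℤ) :
    ∫ x, mFourier k x • G x = mFourierCoeff G (-k) := by
  rw [mFourierCoeff_eq_integral_volume, neg_neg]

lemma integral_mFourier (k : ι → ℤ) :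
    ∫ x : UnitAddTorus ι, mFourier k x = if k = 0 then 1 else 0 := by
  have h := mFourierCoeff_eq_integral_volume (mFourier k : UnitAddTorus ι → ℂ) 0
  simpa [mFourierCoeff_mFourier, mFourier_zero, eq_comm] using h.symm

lemma norm_mFourierCoeff_le {G : UnitAddTorus ι → E} {δ : ℝ} (hG : ∀ x, ‖G x‖ ≤ δ)
    (k : ι → ℤ) : ‖mFourierCoeff G k‖ ≤ δ := by
  rw [mFourierCoeff_eq_integral_volume]
  refine (norm_integral_le_of_norm_le_const (C := δ) (Eventually.of_forall fun x => ?_)).trans ?_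
  · rw [norm_smul, norm_mFourier_apply, one_mul]; exact hG x
  · simp

lemma integrable_mFourier_smul {G : UnitAddTorus ι → E} (hG : Integrable G) (k : ι → ℤ) :
    Integrable fun x => mFourier k x • G x :=
  hG.bdd_smul 1 (mFourier k).continuous.aestronglyMeasurable
    (Eventually.of_forall fun x => (norm_mFourier_apply k x).le)

lemma mFourierCoeff_sub {G H : UnitAddTorus ι → E} (hG : Integrable G) (hH : Integrable H)
    (k : ι → ℤ) :
    mFourierCoeff (fun x => G x - H x) k = mFourierCoeff G k - mFourierCoeff H k := by
  simp only [mFourierCoeff_eq_integral_volume, smul_sub]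
  exact integral_sub (integrable_mFourier_smul hG _) (integrable_mFourier_smul hH _)

lemma mFourierCoeff_comp_add_right (G : UnitAddTorus ι → E) (w : UnitAddTorus ι) (k : ι → ℤ) :
    mFourierCoeff (fun x => G (x + w)) k = mFourier k w • mFourierCoeff G k := by
  have hw : mFourier k w * mFourier (-k) w = 1 := by
    rw [← mFourier_add, add_neg_cancel, mFourier_zero, ContinuousMap.one_apply]
  rw [mFourierCoeff_eq_integral_volume G, ← integral_add_right_eq_self _ w,
    mFourierCoeff_eq_integral_volume, ← integral_smul]
  refine integral_congr_ae (Eventually.of_forall fun x => ?_)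
  simp only [mFourier_apply_add, smul_smul]
  rw [mul_left_comm, hw, mul_one]

lemma mFourierCoeff_comp_add_right_sub {G : UnitAddTorus ι → E} (hG : Integrable G)
    (w : UnitAddTorus ι) (k : ι → ℤ) :
    mFourierCoeff (fun x => G (x + w) - G x) k = (mFourier k w - 1) • mFourierCoeff G k := by
  rw [mFourierCoeff_sub (hG.comp_add_right w) hG, mFourierCoeff_comp_add_right, sub_smul, one_smul]

lemma norm_mFourierCoeff_le_of_mFourier_eq_neg_one {G : UnitAddTorus ι → E} (hG : Integrable G)
    {k : ι → ℤ} {w : UnitAddTorus ι} (hw : mFourier k w = -1) {δ : ℝ}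
    (hδ : ∀ x, ‖G (x + w) - G x‖ ≤ δ) : ‖mFourierCoeff G k‖ ≤ δ := by
  have h := norm_mFourierCoeff_le hδ k
  rw [mFourierCoeff_comp_add_right_sub hG, hw, norm_smul] at h
  norm_num at h
  linarith [norm_nonneg (mFourierCoeff G k)]

/-- The partial sum over the frequencies in `B` of the Fourier series of `H`. -/
def fourierPartialSum (B : Finset (ι → ℤ)) (H : UnitAddTorus ι → ℂ) : C(UnitAddTorus ι, ℂ) :=
  ∑ k ∈ B, mFourierCoeff H k • mFourier k

lemma fourierPartialSum_apply (B : Finset (ι → ℤ)) (H : UnitAddTorus ι → ℂ)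
    (x : UnitAddTorus ι) :
    fourierPartialSum B H x = ∑ k ∈ B, mFourierCoeff H k * mFourier k x := by
  simp only [fourierPartialSum, ContinuousMap.coe_sum, Finset.sum_apply, ContinuousMap.smul_apply,
    smul_eq_mul]

lemma mFourierCoeff_fourierPartialSum (B : Finset (ι → ℤ))
    (H : UnitAddTorus ι → ℂ) (k : ι → ℤ) :
    mFourierCoeff (fourierPartialSum B H) k = if k ∈ B then mFourierCoeff H k else 0 := by
  simp only [mFourierCoeff_eq_integral_volume _ k, fourierPartialSum_apply, Finset.smul_sum]
  rw [integral_finsetSum _ fun l _ => integrable_mFourier_smul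
    (integrable_of_continuous (by fun_prop)) _]
  simp_rw [smul_eq_mul, mul_left_comm (mFourier (-k) _), integral_const_mul]
  have horth (l : ι → ℤ) : ∫ x, mFourier (-k) x * mFourier l x = if k = l then 1 else 0 := by
    rw [← mFourierCoeff_mFourier, mFourierCoeff_eq_integral_volume]
    rfl
  simp [horth, mFourierCoeff_eq_integral_volume]

end FourierCoefficients

section HolderApproximation

open UnitAddTorus

open scoped NNReal

variable {ι : Type*} [Fintype ι] {η K : ℝ≥0} {H : UnitAddTorus ι → ℂ}

lemma half_rpow_lt_one (hη : 0 < η) : (1 / 2 : ℝ) ^ (η : ℝ) < 1 :=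
  Real.rpow_lt_one (by norm_num) (by norm_num) hη

lemma norm_sub_le_of_holderWith {X Y : Type*} [SeminormedAddCommGroup X]
    [SeminormedAddCommGroup Y] {G : X → Y} (hG : HolderWith K η G) {x y : X} {r : ℝ}
    (hr : ‖x - y‖ ≤ r) : ‖G x - G y‖ ≤ K * r ^ (η : ℝ) := by
  rw [← dist_eq_norm] at hr ⊢
  exact (hG.dist_le x y).trans (by gcongr)

/-- Parseval applied to a translation difference. -/
lemma sum_sq_norm_mFourier_sub_one_mul_mFourierCoeff_le (hη : 0 < η) (hH : HolderWith K η H)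
    {w : UnitAddTorus ι} {r : ℝ} (hw : ‖w‖ ≤ r) (F : Finset (ι → ℤ)) :
    ∑ k ∈ F, ‖mFourier k w - 1‖ ^ 2 * ‖mFourierCoeff H k‖ ^ 2 ≤ (K * r ^ (η : ℝ)) ^ 2 := by
  have hc := hH.continuous hη
  have h := hasSum_sq_norm_mFourierCoeff (H := fun x => H (x + w) - H x) (by fun_prop)
  simp only [mFourierCoeff_comp_add_right_sub (integrable_of_continuous hc), norm_smul,
    mul_pow] at h
  refine (sum_le_hasSum F (fun _ _ => by positivity) h).trans ?_
  refine (integral_mono (integrable_of_continuous (by fun_prop))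
    (integrable_const ((K * r ^ (η : ℝ)) ^ 2)) fun x => ?_).trans (by simp)
  exact pow_le_pow_left₀ (norm_nonneg _)
    (norm_sub_le_of_holderWith hH (by rwa [add_sub_cancel_left])) 2

lemma sum_sq_norm_mFourierCoeff_dyadic_shell_le (hη : 0 < η) (hH : HolderWith K η H) {i : ι} {j : ℕ}
    {F : Finset (ι → ℤ)} (hF : ∀ k ∈ F, 2 ^ j ≤ |k i| ∧ |k i| ≤ 2 ^ (j + 1)) :
    ∑ k ∈ F, ‖mFourierCoeff H k‖ ^ 2 ≤ K ^ 2 * (((1 / 2 : ℝ) ^ (η : ℝ)) ^ 2) ^ j := by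
  classical
  have hw : ‖toTorus (Pi.single i ((1 / 2) ^ (j + 2)) : ι → ℝ)‖ ≤ (1 / 2) ^ j := by
    refine norm_toTorus_le (by positivity) fun b => ?_
    rcases eq_or_ne b i with rfl | hb
    · rw [Pi.single_eq_same, abs_of_pos (by positivity)]
      exact pow_le_pow_of_le_one (by norm_num) (by norm_num) (by omega)
    · rw [Pi.single_eq_of_ne hb, abs_zero]; positivity
  calc ∑ k ∈ F, ‖mFourierCoeff H k‖ ^ 2
      ≤ ∑ k ∈ F, ‖mFourier k (toTorus (Pi.single i ((1 / 2) ^ (j + 2)))) - 1‖ ^ 2 *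
          ‖mFourierCoeff H k‖ ^ 2 := Finset.sum_le_sum fun k hk =>
        le_mul_of_one_le_left (by positivity) (one_le_two.trans
          (two_le_sq_norm_mFourier_single_sub_one (hF k hk).1 (hF k hk).2))
    _ ≤ (K * ((1 / 2 : ℝ) ^ j) ^ (η : ℝ)) ^ 2 :=
        sum_sq_norm_mFourier_sub_one_mul_mFourierCoeff_le hη hH hw F
    _ = _ := by rw [← Real.rpow_pow_comm (by norm_num), mul_pow]; ring

lemma sum_sq_norm_mFourierCoeff_le_of_pow_le_abs_apply (hη : 0 < η) (hH : HolderWith K η H) {J : ℕ}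
    {i : ι} {F : Finset (ι → ℤ)} (hF : ∀ k ∈ F, 2 ^ J ≤ |k i|) :
    ∑ k ∈ F, ‖mFourierCoeff H k‖ ^ 2 ≤ K ^ 2 * ((((1 / 2 : ℝ) ^ (η : ℝ)) ^ 2) ^ J /
      (1 - ((1 / 2 : ℝ) ^ (η : ℝ)) ^ 2)) := by
  set τ := (1 / 2 : ℝ) ^ (η : ℝ)
  have hτ0 : 0 < τ := by positivity
  have hτ1 : τ < 1 := half_rpow_lt_one hη
  set N := F.sup (fun k => Nat.log 2 (k i).natAbs) + 1
  have hlog : ∀ k ∈ F, Nat.log 2 (k i).natAbs ∈ Finset.Ico J N := fun k hk => by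
    refine Finset.mem_Ico.2 ⟨Nat.le_log_of_pow_le one_lt_two ?_, Nat.lt_succ_of_le
      (Finset.le_sup (f := fun k : ι → ℤ => Nat.log 2 (k i).natAbs) hk)⟩
    have := hF k hk
    rw [Int.abs_eq_natAbs] at this
    exact_mod_cast this
  rw [← Finset.sum_fiberwise_of_maps_to hlog]
  calc ∑ j ∈ Finset.Ico J N, ∑ k ∈ F with Nat.log 2 (k i).natAbs = j, ‖mFourierCoeff H k‖ ^ 2
      ≤ ∑ j ∈ Finset.Ico J N, K ^ 2 * (τ ^ 2) ^ j := by
        refine Finset.sum_le_sum fun j _ =>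
          sum_sq_norm_mFourierCoeff_dyadic_shell_le hη hH (i := i) fun k hk => ?_
        obtain ⟨hkF, rfl⟩ := Finset.mem_filter.1 hk
        have hne : (k i).natAbs ≠ 0 := fun h => by
          have := hF k hkF
          rw [Int.natAbs_eq_zero.1 h, abs_zero] at this
          exact absurd this (by positivity : (0 : ℤ) < 2 ^ J).not_ge
        rw [Int.abs_eq_natAbs]
        exact ⟨by exact_mod_cast Nat.pow_log_le_self 2 hne,
          by exact_mod_cast (Nat.lt_pow_succ_log_self one_lt_two _).le⟩
    _ = K ^ 2 * ∑ j ∈ Finset.Ico J N, (τ ^ 2) ^ j := (Finset.mul_sum _ _ _).symm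
    _ ≤ K ^ 2 * ((τ ^ 2) ^ J / (1 - τ ^ 2)) := by
        gcongr
        exact geom_sum_Ico_le_of_lt_one (by positivity) (by nlinarith)

lemma sum_sq_norm_mFourierCoeff_le_of_pow_le_abs (hη : 0 < η) (hH : HolderWith K η H) {J : ℕ}
    {F : Finset (ι → ℤ)} (hF : ∀ k ∈ F, ∃ i, 2 ^ J ≤ |k i|) :
    ∑ k ∈ F, ‖mFourierCoeff H k‖ ^ 2 ≤ Fintype.card ι * (K ^ 2 *
      ((((1 / 2 : ℝ) ^ (η : ℝ)) ^ 2) ^ J / (1 - ((1 / 2 : ℝ) ^ (η : ℝ)) ^ 2))) := by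
  classical
  rcases F.eq_empty_or_nonempty with rfl | ⟨k₀, hk₀⟩
  · have := half_rpow_lt_one hη
    have : 0 ≤ 1 - ((1 / 2 : ℝ) ^ (η : ℝ)) ^ 2 :=
      sub_nonneg.2 (pow_le_one₀ (by positivity) this.le)
    rw [Finset.sum_empty]
    positivity
  have : Nonempty ι := (hF k₀ hk₀).nonempty
  choose! i hi using hF
  rw [← Finset.sum_fiberwise_of_maps_to (g := i) (t := Finset.univ) fun _ _ => Finset.mem_univ _,
    ← nsmul_eq_mul]
  refine Finset.sum_le_card_nsmul _ _ _ fun b _ =>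
    sum_sq_norm_mFourierCoeff_le_of_pow_le_abs_apply hη hH (i := b) fun k hk => ?_
  obtain ⟨hkF, rfl⟩ := Finset.mem_filter.1 hk
  exact hi k hkF

variable [DecidableEq ι]

variable (ι) in
/-- The box of frequencies with entries of absolute value at most `2 ^ J`. -/
def freqBox (J : ℕ) : Finset (ι → ℤ) := Fintype.piFinset fun _ => Finset.Icc (-2 ^ J) (2 ^ J)

lemma mem_freqBox {J : ℕ} {k : ι → ℤ} : k ∈ freqBox ι J ↔ ∀ i, |k i| ≤ 2 ^ J := by
  simp [freqBox, Fintype.mem_piFinset, abs_le]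

variable (ι) in
lemma card_freqBox_le (J : ℕ) :
    ((freqBox ι J).card : ℝ) ≤ 4 ^ Fintype.card ι * (2 ^ Fintype.card ι) ^ J := by
  have hside : ((2 : ℤ) ^ J + 1 - -2 ^ J).toNat = 2 * 2 ^ J + 1 := by
    have : (2 : ℤ) ^ J + 1 - -2 ^ J = ((2 * 2 ^ J + 1 : ℕ) : ℤ) := by push_cast; ring
    rw [this, Int.toNat_natCast]
  have hcard : (freqBox ι J).card = (2 * 2 ^ J + 1) ^ Fintype.card ι := by
    rw [freqBox, Fintype.card_piFinset]
    simp only [Int.card_Icc, Finset.prod_const, Finset.card_univ, hside]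
  have h1 : (1 : ℝ) ≤ 2 ^ J := one_le_pow₀ one_le_two
  rw [hcard, pow_right_comm, ← mul_pow]
  push_cast
  gcongr
  linarith

lemma sq_integral_le_integral_sq {Ω : Type*} [MeasurableSpace Ω] {μ : Measure Ω}
    [IsProbabilityMeasure μ] {g : Ω → ℝ} (hg : MemLp g 2 μ) :
    (∫ x, g x ∂μ) ^ 2 ≤ ∫ x, g x ^ 2 ∂μ := by
  have h := variance_nonneg g μ
  rw [variance_eq_sub hg] at h
  simpa using h

variable (ι) in
lemma exists_integral_norm_sub_fourierPartialSum_le (hη : 0 < η) :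
    ∃ D : ℝ, 0 ≤ D ∧ ∀ (K : ℝ≥0) (H : UnitAddTorus ι → ℂ), HolderWith K η H → ∀ J : ℕ,
      ∫ x, ‖H x - fourierPartialSum (freqBox ι J) H x‖ ≤ D * K * ((1 / 2 : ℝ) ^ (η : ℝ)) ^ J := by
  set τ := (1 / 2 : ℝ) ^ (η : ℝ)
  have hτ0 : 0 < τ := by positivity
  have hτ1 : τ < 1 := half_rpow_lt_one hη
  have hq0 : 0 < 1 - τ ^ 2 := by nlinarith
  refine ⟨√(Fintype.card ι / (1 - τ ^ 2)), by positivity, fun K H hH J => ?_⟩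
  have hc := hH.continuous hη
  set P := fourierPartialSum (freqBox ι J) H
  refine abs_le_of_sq_le_sq' ((sq_integral_le_integral_sq ?_).trans ?_) (by positivity) |>.2
  · exact (by fun_prop : Continuous fun x => ‖H x - P x‖).memLp_of_hasCompactSupport
      (HasCompactSupport.of_compactSpace _)
  refine hasSum_le_of_sum_le (hasSum_sq_norm_mFourierCoeff (H := fun x => H x - P x)
    (by fun_prop)) fun F => ?_
  have hcoeff (k : ι → ℤ) : ‖mFourierCoeff (fun x => H x - P x) k‖ ^ 2 =
      if k ∉ freqBox ι J then ‖mFourierCoeff H k‖ ^ 2 else 0 := by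
    rw [mFourierCoeff_sub (integrable_of_continuous hc) (integrable_of_continuous P.continuous),
      mFourierCoeff_fourierPartialSum]
    split_ifs <;> simp_all
  simp_rw [hcoeff]
  rw [← Finset.sum_filter]
  refine (sum_sq_norm_mFourierCoeff_le_of_pow_le_abs (J := J) hη hH fun k hk => ?_).trans_eq ?_
  · have := (Finset.mem_filter.1 hk).2
    rw [mem_freqBox] at this
    push Not at this
    exact this.imp fun i hi => hi.le
  · rw [mul_pow, mul_pow, Real.sq_sqrt (by positivity)]
    ring

end HolderApproximation

section ToralAutomorphisms

open UnitAddTorus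

open scoped NNReal

variable {d : ℕ} {S : Matrix (Fin d) (Fin d) ℤ}

lemma torusAut_add (A : Matrix (Fin d) (Fin d) ℤ) (x y : Torus d) :
    torusAut A (x + y) = torusAut A x + torusAut A y := by
  ext i
  simp [torusAut, smul_add, Finset.sum_add_distrib]

lemma torusAut_sub (A : Matrix (Fin d) (Fin d) ℤ) (x y : Torus d) :
    torusAut A (x - y) = torusAut A x - torusAut A y := by
  ext i
  simp [torusAut, smul_sub, Finset.sum_sub_distrib]

lemma torusAut_one (x : Torus d) : torusAut (1 : Matrix (Fin d) (Fin d) ℤ) x = x := by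
  ext i
  simp [torusAut, Matrix.one_apply]

lemma torusAut_mul (A B : Matrix (Fin d) (Fin d) ℤ) (x : Torus d) :
    torusAut (A * B) x = torusAut A (torusAut B x) := by
  ext i
  simp only [torusAut, Matrix.mul_apply, Finset.sum_smul, Finset.smul_sum, mul_smul]
  exact Finset.sum_comm

lemma continuous_torusAut (A : Matrix (Fin d) (Fin d) ℤ) : Continuous (torusAut A) := by
  unfold torusAut
  fun_prop

lemma iterate_torusAut (A : Matrix (Fin d) (Fin d) ℤ) (n : ℕ) :
    (torusAut A)^[n] = torusAut (A ^ n) := by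
  induction n with
  | zero => funext x; simp [torusAut_one]
  | succ n ih => funext x; rw [Function.iterate_succ_apply', ih, ← torusAut_mul, pow_succ']

lemma titer_torusAut (S : Matrix (Fin d) (Fin d) ℤ) (k : ℤ) :
    Titer (torusAut S) (torusAut S⁻¹) k = torusAut (S ^ k) := by
  cases k with
  | ofNat n => simp only [Titer, iterate_torusAut, Int.ofNat_eq_natCast, zpow_natCast]
  | negSucc n => simp only [Titer, iterate_torusAut, zpow_negSucc, Matrix.inv_pow']

lemma torusAut_zpow_add (hS : IsUnit S.det) (j k : ℤ) (x : Torus d) :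
    torusAut (S ^ (j + k)) x = torusAut (S ^ j) (torusAut (S ^ k) x) := by
  rw [Matrix.zpow_add hS, torusAut_mul]

lemma measurePreserving_torusAut_zpow (hS : IsUnit S.det) (k : ℤ) :
    MeasurePreserving (torusAut (S ^ k)) (volume : Measure (Torus d)) volume := by
  refine AddMonoidHom.measurePreserving (f := AddMonoidHom.mk' (torusAut (S ^ k)) (torusAut_add _))
    (continuous_torusAut _) (fun y => ⟨torusAut (S ^ (-k)) y, ?_⟩) rfl
  rw [AddMonoidHom.mk'_apply, ← torusAut_zpow_add hS, add_neg_cancel, zpow_zero, torusAut_one]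

lemma torusAut_toTorus (A : Matrix (Fin d) (Fin d) ℤ) (v : Fin d → ℝ) :
    torusAut A (toTorus v) = toTorus ((A.map (Int.castRingHom ℝ)).mulVec v) := by
  ext i
  simp only [torusAut, toTorus, Matrix.mulVec, dotProduct, Matrix.map_apply, eq_intCast]
  rw [← QuotientAddGroup.mk'_apply, map_sum]
  refine Finset.sum_congr rfl fun j _ => ?_
  rw [← zsmul_eq_mul, map_zsmul]
  rfl

lemma mFourier_torusAut (A : Matrix (Fin d) (Fin d) ℤ) (k : Fin d → ℤ) (x : Torus d) :
    mFourier k (torusAut A x) = mFourier (Matrix.vecMul k A) x := by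
  simp only [mFourier, torusAut, ContinuousMap.coe_mk, fourier_apply_sum, Matrix.vecMul,
    dotProduct, fourier_sum_apply, fourier_apply_zsmul]
  exact Finset.prod_comm

lemma lipschitzWith_torusAut (A : Matrix (Fin d) (Fin d) ℤ) :
    LipschitzWith (∑ i, ∑ j, ‖A i j‖₊) (torusAut A) := by
  refine LipschitzWith.of_dist_le_mul fun x y => ?_
  rw [dist_eq_norm, dist_eq_norm, ← torusAut_sub, ← coe_nnnorm, ← coe_nnnorm, ← NNReal.coe_mul,
    NNReal.coe_le_coe, pi_nnnorm_le_iff, Finset.sum_mul]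
  refine fun i => le_trans ?_ (Finset.single_le_sum (fun _ _ => zero_le) (Finset.mem_univ i))
  rw [Finset.sum_mul]
  refine (nnnorm_sum_le _ _).trans (Finset.sum_le_sum fun j _ => ?_)
  refine (nnnorm_zsmul_le _ _).trans ?_
  gcongr
  exact nnnorm_le_pi_nnnorm _ j

lemma exists_lipschitzWith_torusAut_pow (A : Matrix (Fin d) (Fin d) ℤ) :
    ∃ Λ : ℝ≥0, 1 ≤ Λ ∧ ∀ n : ℕ, LipschitzWith (Λ ^ n) (torusAut (A ^ n)) := by
  refine ⟨max 1 (∑ i, ∑ j, ‖A i j‖₊), le_max_left _ _, fun n => ?_⟩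
  rw [← iterate_torusAut]
  exact ((lipschitzWith_torusAut A).weaken (le_max_right _ _)).iterate n

lemma noRootOfUnityEigenvalue_inv (hS : IsUnit S.det) (hEig : NoRootOfUnityEigenvalue S) :
    NoRootOfUnityEigenvalue S⁻¹ := by
  intro z hz n hn hzn
  set A := S.map (fun a => (a : ℂ))
  set B := S⁻¹.map (fun a => (a : ℂ))
  have hAB : A * B = 1 := by
    have := congr_arg (Int.castRingHom ℂ).mapMatrix (Matrix.mul_nonsing_inv S hS)
    rwa [map_mul, map_one] at this
  have hz0 : z ≠ 0 := by
    rintro rfl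
    exact zero_ne_one ((zero_pow hn).symm.trans hzn)
  refine hEig z⁻¹ ?_ n hn (by rw [inv_pow, hzn, inv_one])
  rw [Polynomial.IsRoot, Matrix.eval_charpoly] at hz ⊢
  have hfactor : Matrix.scalar (Fin d) z⁻¹ - A =
      (-(Matrix.scalar (Fin d) z⁻¹)) * (A * (Matrix.scalar (Fin d) z - B)) := by
    rw [mul_sub, hAB, ← (Matrix.scalar_commute z (Commute.all z) A).eq, mul_sub, mul_one, neg_mul,
      ← mul_assoc, ← map_mul, inv_mul_cancel₀ hz0, map_one, one_mul]
    abel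
  rw [hfactor, Matrix.det_mul, Matrix.det_mul, hz, mul_zero, mul_zero]

end ToralAutomorphisms

section Covariance

variable {Ω Ω' : Type*} [MeasurableSpace Ω] [MeasurableSpace Ω'] {μ : Measure Ω} {ν : Measure Ω'}
  {U V W : Ω → ℂ}

lemma norm_integral_le_one [IsProbabilityMeasure μ] {E : Type*} [NormedAddCommGroup E]
    [NormedSpace ℝ E] {f : Ω → E} (hf : ∀ x, ‖f x‖ ≤ 1) : ‖∫ x, f x ∂μ‖ ≤ 1 := by
  simpa using norm_integral_le_of_norm_le_const (μ := μ) (Eventually.of_forall hf)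

lemma covC_comp {T : Ω → Ω'} (hT : MeasurePreserving T μ ν) {U V : Ω' → ℂ}
    (hU : AEStronglyMeasurable U ν) (hV : AEStronglyMeasurable V ν) :
    covC μ (fun x => U (T x)) (fun x => V (T x)) = covC ν U V := by
  rw [← hT.map_eq] at hU hV
  have hUV := integral_map hT.aemeasurable (hU.mul hV)
  simp only [Pi.mul_apply] at hUV
  rw [covC, covC, ← hT.map_eq, hUV, integral_map hT.aemeasurable hU,
    integral_map hT.aemeasurable hV]

lemma norm_covC_le_two_mul_integral_norm [IsProbabilityMeasure μ] (hU : ∀ x, ‖U x‖ ≤ 1)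
    (hV : Integrable V μ) : ‖covC μ U V‖ ≤ 2 * ∫ x, ‖V x‖ ∂μ := by
  have h1 : ‖∫ x, U x * V x ∂μ‖ ≤ ∫ x, ‖V x‖ ∂μ :=
    norm_integral_le_of_norm_le hV.norm (Eventually.of_forall fun x => by
      rw [norm_mul]; exact mul_le_of_le_one_left (norm_nonneg _) (hU x))
  have h2 : ‖(∫ x, U x ∂μ) * ∫ x, V x ∂μ‖ ≤ ∫ x, ‖V x‖ ∂μ := by
    rw [norm_mul]
    exact (mul_le_of_le_one_left (norm_nonneg _) (norm_integral_le_one hU)).trans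
      (norm_integral_le_integral_norm _)
  exact (norm_sub_le _ _).trans (by linarith)

lemma norm_covC_le_two [IsProbabilityMeasure μ] (hU : ∀ x, ‖U x‖ ≤ 1) (hV : ∀ x, ‖V x‖ ≤ 1) :
    ‖covC μ U V‖ ≤ 2 := by
  have h1 := norm_integral_le_one (μ := μ) (f := fun x => U x * V x) fun x => by
    rw [norm_mul]; exact mul_le_one₀ (hU x) (norm_nonneg _) (hV x)
  have h2 : ‖(∫ x, U x ∂μ) * ∫ x, V x ∂μ‖ ≤ 1 := by
    rw [norm_mul]
    exact mul_le_one₀ (norm_integral_le_one hU) (norm_nonneg _) (norm_integral_le_one hV)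
  exact (norm_sub_le _ _).trans (by linarith)

lemma covC_sub_right (hUm : AEStronglyMeasurable U μ) (hU : ∀ x, ‖U x‖ ≤ 1) (hV : Integrable V μ)
    (hW : Integrable W μ) : covC μ U (fun x => V x - W x) = covC μ U V - covC μ U W := by
  have hint {Z : Ω → ℂ} (hZ : Integrable Z μ) : Integrable (fun x => U x * Z x) μ :=
    hZ.bdd_mul hUm (Eventually.of_forall hU)
  simp only [covC, mul_sub]
  rw [integral_sub (hint hV) (hint hW), integral_sub hV hW]
  ring

lemma covC_sum_right {κ : Type*} (s : Finset κ) (c : κ → ℂ) {e : κ → Ω → ℂ}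
    (hUm : AEStronglyMeasurable U μ) (hU : ∀ x, ‖U x‖ ≤ 1) (he : ∀ k, Integrable (e k) μ) :
    covC μ U (fun x => ∑ k ∈ s, c k * e k x) = ∑ k ∈ s, c k * covC μ U (e k) := by
  have hint (k : κ) : Integrable (fun x => U x * e k x) μ :=
    (he k).bdd_mul hUm (Eventually.of_forall hU)
  simp only [covC, Finset.mul_sum, mul_left_comm (U _), mul_sub]
  rw [integral_finsetSum _ fun k _ => (hint k).const_mul _,
    integral_finsetSum _ fun k _ => (he k).const_mul _, Finset.mul_sum, ← Finset.sum_sub_distrib]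
  refine Finset.sum_congr rfl fun k _ => ?_
  rw [integral_const_mul, integral_const_mul]
  ring

lemma norm_covC_le_add_two_mul_integral_norm_sub [IsProbabilityMeasure μ]
    (hUm : AEStronglyMeasurable U μ) (hU : ∀ x, ‖U x‖ ≤ 1) (hV : Integrable V μ)
    (hW : Integrable W μ) :
    ‖covC μ U V‖ ≤ ‖covC μ U W‖ + 2 * ∫ x, ‖V x - W x‖ ∂μ := by
  rw [show covC μ U V = covC μ U W + covC μ U (fun x => V x - W x) by
    rw [covC_sub_right hUm hU hV hW]; ring]
  exact (norm_add_le _ _).trans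
    (add_le_add_right (norm_covC_le_two_mul_integral_norm hU (hV.sub hW)) _)

end Covariance

section Decorrelation

open UnitAddTorus

open scoped NNReal

variable {d : ℕ} {S : Matrix (Fin d) (Fin d) ℤ} {η : ℝ≥0} {G H : Torus d → ℂ}

/-- `G` is `η`-Hölder, with constant `K`, along the displacements all of whose preimages under the
powers of `S` stay small. This holds for functions of the past `S⁻ʲ x`, `j ≥ 0`, which need not be
Hölder with a controlled constant in the other directions. -/
def IsHolderAlongUnstable (S : Matrix (Fin d) (Fin d) ℤ) (K η : ℝ≥0) (G : Torus d → ℂ) : Prop :=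
  ∀ (v : Fin d → ℝ) (δ : ℝ), 0 ≤ δ →
    (∀ (j : ℕ) (i : Fin d), |((S⁻¹ ^ j).map (Int.castRingHom ℝ)).mulVec v i| ≤ δ) →
    ∀ x, ‖G (x + toTorus v) - G x‖ ≤ K * δ ^ (η : ℝ)

lemma mFourier_neg_eq_neg_one {l : Fin d → ℤ} {w : Torus d} (hw : mFourier l w = -1) :
    mFourier (-l) w = -1 := by
  rw [mFourier_neg, hw, map_neg, map_one]

lemma norm_covC_mFourier_le (hG : Continuous G) {l : Fin d → ℤ} {w : Torus d}
    (hw : mFourier l w = -1) {δ : ℝ} (hδ : ∀ x, ‖G (x + w) - G x‖ ≤ δ) :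
    ‖covC volume G (mFourier l)‖ ≤ δ := by
  have hl : l ≠ 0 := by
    rintro rfl
    norm_num [mFourier_zero] at hw
  have hcoeff : ∫ x, G x * mFourier l x = mFourierCoeff G (-l) := by
    simp only [← integral_mFourier_smul, smul_eq_mul, mul_comm]
  rw [covC, integral_mFourier, if_neg hl, mul_zero, sub_zero, hcoeff]
  exact norm_mFourierCoeff_le_of_mFourier_eq_neg_one (integrable_of_continuous hG)
    (mFourier_neg_eq_neg_one hw) hδ

lemma norm_covC_fourierPartialSum_comp_le (hG : Continuous G) (hG1 : ∀ x, ‖G x‖ ≤ 1)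
    (hH1 : ∀ x, ‖H x‖ ≤ 1) (B : Finset (Fin d → ℤ)) (A : Matrix (Fin d) (Fin d) ℤ) {ε : ℝ}
    (hε : ∀ k ∈ B, ‖covC volume G (mFourier (Matrix.vecMul k A))‖ ≤ ε) :
    ‖covC volume G (fun x => fourierPartialSum B H (torusAut A x))‖ ≤ B.card * ε := by
  simp only [fourierPartialSum_apply, mFourier_torusAut]
  rw [covC_sum_right B _ hG.aestronglyMeasurable hG1 fun k =>
    integrable_of_continuous (mFourier _).continuous, ← nsmul_eq_mul]
  refine (norm_sum_le _ _).trans (Finset.sum_le_card_nsmul _ _ _ fun k hk => ?_)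
  rw [norm_mul]
  exact (mul_le_of_le_one_left (norm_nonneg _) (norm_mFourierCoeff_le hH1 k)).trans (hε k hk)

lemma covC_mFourier_zero (G : Torus d → ℂ) : covC volume G (mFourier (0 : Fin d → ℤ)) = 0 := by
  simp [covC, mFourier_zero]

lemma exists_norm_covC_mFourier_vecMul_le (hS : IsUnit S.det) (hEig : NoRootOfUnityEigenvalue S)
    (hη : 0 < η) :
    ∃ (θ C : ℝ) (κ : ℕ), 0 < θ ∧ θ < 1 ∧ 0 ≤ C ∧ ∀ (G : Torus d → ℂ) (K : ℝ≥0), Continuous G →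
      IsHolderAlongUnstable S K η G → ∀ J, ∀ k ∈ freqBox (Fin d) J, ∀ p ≥ κ * (J + 1),
        ‖covC volume G (mFourier (Matrix.vecMul k (S ^ p)))‖ ≤
          C * K * θ ^ (p - κ * (J + 1)) := by
  obtain ⟨θ, C, κ, hθ0, hθ1, hC, hvec⟩ := exists_unstable_half_vector hS hEig
  refine ⟨θ ^ (η : ℝ), C ^ (η : ℝ), κ, by positivity, Real.rpow_lt_one hθ0.le hθ1 hη,
    by positivity, fun G K hGc hG J k hk p hp => ?_⟩
  rcases eq_or_ne k 0 with rfl | hk0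
  · rw [Matrix.zero_vecMul, covC_mFourier_zero, norm_zero]
    positivity
  obtain ⟨v, hv, hvS⟩ := hvec J k hk0 (fun i => mod_cast mem_freqBox.1 hk i) p hp
  refine (norm_covC_mFourier_le hGc (mFourier_toTorus_eq_neg_one hv)
    (hG v _ (by positivity) hvS)).trans_eq ?_
  rw [Real.mul_rpow hC (by positivity), Real.rpow_pow_comm hθ0.le]
  ring

lemma exists_norm_covC_fourierPartialSum_comp_le (hS : IsUnit S.det)
    (hEig : NoRootOfUnityEigenvalue S) (hη : 0 < η) {τ : ℝ} (hτ : 0 < τ) :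
    ∃ (C : ℝ) (Q : ℕ), 0 ≤ C ∧ 0 < Q ∧ ∀ (G H : Torus d → ℂ) (K : ℝ≥0), Continuous G →
      (∀ x, ‖G x‖ ≤ 1) → (∀ x, ‖H x‖ ≤ 1) → IsHolderAlongUnstable S K η G →
      ∀ J, ∀ p ≥ Q * (J + 1),
        ‖covC volume G (fun x => fourierPartialSum (freqBox (Fin d) J) H
          (torusAut (S ^ p) x))‖ ≤ C * K * τ ^ J := by
  obtain ⟨θ, C, κ, hθ0, hθ1, hC, hcov⟩ := exists_norm_covC_mFourier_vecMul_le hS hEig hη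
  obtain ⟨m, hm⟩ := exists_pow_lt_of_lt_one (show 0 < τ / 2 ^ d by positivity) hθ1
  refine ⟨4 ^ d * C, κ + m + 1, by positivity, by omega, fun G H K hGc hG1 hH1 hG J p hp => ?_⟩
  have hp' : κ * (J + 1) + m * J ≤ p := by nlinarith
  have hθm : θ ^ (p - κ * (J + 1)) ≤ (τ / 2 ^ d) ^ J :=
    calc θ ^ (p - κ * (J + 1)) ≤ θ ^ (m * J) := pow_le_pow_of_le_one hθ0.le hθ1.le (by omega)
      _ ≤ (τ / 2 ^ d) ^ J := by rw [pow_mul]; gcongr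
  have hcard := card_freqBox_le (Fin d) J
  rw [Fintype.card_fin] at hcard
  calc _ ≤ (freqBox (Fin d) J).card * (C * K * θ ^ (p - κ * (J + 1))) :=
        norm_covC_fourierPartialSum_comp_le hGc hG1 hH1 _ _ fun k hk =>
          hcov G K hGc hG J k hk p (by omega)
    _ ≤ 4 ^ d * (2 ^ d) ^ J * (C * K * (τ / 2 ^ d) ^ J) := by gcongr
    _ = 4 ^ d * C * K * (2 ^ d * (τ / 2 ^ d)) ^ J := by rw [mul_pow]; ring
    _ = 4 ^ d * C * K * τ ^ J := by rw [mul_div_cancel₀ _ (by positivity)]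

lemma norm_covC_comp_torusAut_le (hS : IsUnit S.det) (hG : Continuous G) (hG1 : ∀ x, ‖G x‖ ≤ 1)
    (hH : Continuous H) (P : C(Torus d, ℂ)) (p : ℕ) :
    ‖covC volume G (fun x => H (torusAut (S ^ p) x))‖ ≤
      ‖covC volume G (fun x => P (torusAut (S ^ p) x))‖ + 2 * ∫ x, ‖H x - P x‖ := by
  have hT := measurePreserving_torusAut_zpow hS p
  have hTc := continuous_torusAut (S ^ p)
  have hinv : ∫ x, ‖H (torusAut (S ^ p) x) - P (torusAut (S ^ p) x)‖ = ∫ x, ‖H x - P x‖ := by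
    rw [zpow_natCast] at hT
    conv_rhs => rw [← hT.map_eq]
    exact (integral_map hT.aemeasurable
      (by fun_prop : Continuous fun x => ‖H x - P x‖).aestronglyMeasurable).symm
  rw [← hinv]
  exact norm_covC_le_add_two_mul_integral_norm_sub hG.aestronglyMeasurable hG1
    (integrable_of_continuous (by fun_prop)) (integrable_of_continuous (by fun_prop))

lemma exists_norm_covC_comp_torusAut_le (hS : IsUnit S.det) (hEig : NoRootOfUnityEigenvalue S)
    (hη : 0 < η) :
    ∃ (C τ : ℝ) (Q : ℕ), 0 ≤ C ∧ 0 < τ ∧ τ < 1 ∧ 0 < Q ∧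
      ∀ (G H : Torus d → ℂ) (K L : ℝ≥0), Continuous G → (∀ x, ‖G x‖ ≤ 1) → (∀ x, ‖H x‖ ≤ 1) →
        IsHolderAlongUnstable S K η G → HolderWith L η H → ∀ J, ∀ p ≥ Q * (J + 1),
          ‖covC volume G (fun x => H (torusAut (S ^ p) x))‖ ≤ C * (K + L) * τ ^ J := by
  obtain ⟨D, hD, happrox⟩ := exists_integral_norm_sub_fourierPartialSum_le (Fin d) hη
  have hτ : 0 < (1 / 2 : ℝ) ^ (η : ℝ) := by positivity
  obtain ⟨C, Q, hC, hQ, hcov⟩ := exists_norm_covC_fourierPartialSum_comp_le hS hEig hη hτ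
  refine ⟨C + 2 * D, _, Q, by positivity, hτ, half_rpow_lt_one hη, hQ,
    fun G H K L hGc hG1 hH1 hG hH J p hp => ?_⟩
  calc _ ≤ C * K * ((1 / 2 : ℝ) ^ (η : ℝ)) ^ J + 2 * (D * L * ((1 / 2 : ℝ) ^ (η : ℝ)) ^ J) :=
        (norm_covC_comp_torusAut_le hS hGc hG1 (hH.continuous hη) _ p).trans (by
          gcongr
          exacts [hcov G H K hGc hG1 hH1 hG J p hp, happrox L H hH J])
    _ = (C * K + 2 * D * L) * ((1 / 2 : ℝ) ^ (η : ℝ)) ^ J := by ring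
    _ ≤ (C + 2 * D) * (K + L) * ((1 / 2 : ℝ) ^ (η : ℝ)) ^ J := by
        gcongr
        nlinarith [mul_nonneg hC L.2, mul_nonneg hD K.2]

lemma exists_pow_bound_of_block_bound {τ : ℝ} (hτ0 : 0 < τ) (hτ1 : τ < 1) {Q : ℕ} (hQ : 0 < Q) :
    ∃ ρ : ℝ, 0 < ρ ∧ ρ < 1 ∧ ∀ (a M : ℝ) (p : ℕ), 0 ≤ M → a ≤ M →
      (∀ J, Q * (J + 1) ≤ p → a ≤ M * τ ^ J) → a ≤ M / τ ^ 2 * ρ ^ p := by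
  have hρ1 : τ ^ (1 / (Q : ℝ)) < 1 := Real.rpow_lt_one hτ0.le hτ1 (by positivity)
  refine ⟨τ ^ (1 / (Q : ℝ)), by positivity, hρ1, fun a M p hM haM ha => ?_⟩
  have hQτ : (τ ^ (1 / (Q : ℝ))) ^ Q = τ := by
    rw [one_div, Real.rpow_inv_natCast_pow hτ0.le hQ.ne']
  have hτρ : τ ^ (p / Q + 1) ≤ (τ ^ (1 / (Q : ℝ))) ^ p := by
    conv_lhs => rw [← hQτ, ← pow_mul]
    exact pow_le_pow_of_le_one (by positivity) hρ1.le (Nat.lt_mul_div_succ p hQ).le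
  have hblock : a * τ ^ 2 ≤ M * τ ^ (p / Q + 1) := by
    rcases h : p / Q with _ | J
    · calc a * τ ^ 2 ≤ M * τ ^ 2 := by gcongr
        _ ≤ M * τ ^ (0 + 1) := by
          gcongr M * ?_
          exact pow_le_pow_of_le_one hτ0.le hτ1.le (by norm_num)
    · calc a * τ ^ 2 ≤ M * τ ^ J * τ ^ 2 := by
            gcongr
            exact ha J (h ▸ Nat.mul_div_le p Q)
        _ = M * τ ^ (J + 1 + 1) := by ring
  rw [div_mul_eq_mul_div, le_div_iff₀ (by positivity)]
  exact hblock.trans (by gcongr)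

lemma exists_norm_covC_comp_torusAut_le_pow (hS : IsUnit S.det)
    (hEig : NoRootOfUnityEigenvalue S) (hη : 0 < η) :
    ∃ C ρ : ℝ, 0 ≤ C ∧ 0 < ρ ∧ ρ < 1 ∧ ∀ (G H : Torus d → ℂ) (K L : ℝ≥0), Continuous G →
      (∀ x, ‖G x‖ ≤ 1) → (∀ x, ‖H x‖ ≤ 1) → IsHolderAlongUnstable S K η G → HolderWith L η H →
      ∀ p : ℕ, ‖covC volume G (fun x => H (torusAut (S ^ p) x))‖ ≤ C * (1 + K + L) * ρ ^ p := by
  obtain ⟨C, τ, Q, hC, hτ0, hτ1, hQ, hcov⟩ := exists_norm_covC_comp_torusAut_le hS hEig hη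
  obtain ⟨ρ, hρ0, hρ1, hρ⟩ := exists_pow_bound_of_block_bound hτ0 hτ1 hQ
  refine ⟨(2 + C) / τ ^ 2, ρ, by positivity, hρ0, hρ1,
    fun G H K L hGc hG1 hH1 hG hH p => ?_⟩
  have hK := K.2
  have hL := L.2
  refine (hρ _ ((2 + C) * (1 + K + L)) p (by positivity) ?_ fun J hJ => ?_).trans_eq (by ring)
  · exact (norm_covC_le_two hG1 fun x => hH1 _).trans (by
      nlinarith [mul_nonneg hC hK, mul_nonneg hC hL])
  · refine (hcov G H K L hGc hG1 hH1 hG hH J p hJ).trans ?_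
    gcongr <;> linarith

end Decorrelation

section HolderProducts

open scoped NNReal

lemma holderWith_of_dist_le {X Y : Type*} [PseudoMetricSpace X] [PseudoMetricSpace Y]
    {K η : ℝ≥0} {f : X → Y} (h : ∀ x y, dist (f x) (f y) ≤ K * dist x y ^ (η : ℝ)) :
    HolderWith K η f := fun x y => by
  have hxy := h x y
  simp only [← coe_nndist, ← NNReal.coe_rpow, ← NNReal.coe_mul, NNReal.coe_le_coe] at hxy
  rw [edist_nndist, edist_nndist, ← ENNReal.coe_rpow_of_nonneg _ η.coe_nonneg, ← ENNReal.coe_mul]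
  exact ENNReal.coe_le_coe.2 hxy

variable {ι R : Type*} [NormedCommRing R] [NormOneClass R] {s : Finset ι}

lemma norm_prod_le_one {a : ι → R} (ha : ∀ i ∈ s, ‖a i‖ ≤ 1) : ‖∏ i ∈ s, a i‖ ≤ 1 :=
  (s.norm_prod_le a).trans (Finset.prod_le_one (fun _ _ => norm_nonneg _) ha)

lemma norm_prod_sub_prod_le {a b : ι → R} (ha : ∀ i ∈ s, ‖a i‖ ≤ 1)
    (hb : ∀ i ∈ s, ‖b i‖ ≤ 1) : ‖∏ i ∈ s, a i - ∏ i ∈ s, b i‖ ≤ ∑ i ∈ s, ‖a i - b i‖ := by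
  induction s using Finset.cons_induction with
  | empty => simp
  | cons j s hj ih =>
    simp only [Finset.forall_mem_cons] at ha hb
    have hsplit : a j * ∏ i ∈ s, a i - b j * ∏ i ∈ s, b i =
        (a j - b j) * ∏ i ∈ s, a i + b j * (∏ i ∈ s, a i - ∏ i ∈ s, b i) := by ring
    rw [Finset.prod_cons, Finset.prod_cons, Finset.sum_cons, hsplit]
    refine (norm_add_le _ _).trans (add_le_add ?_ ?_)
    · exact (norm_mul_le _ _).trans
        (mul_le_of_le_one_right (norm_nonneg _) (norm_prod_le_one ha.2))
    · exact (norm_mul_le _ _).trans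
        ((mul_le_of_le_one_left (norm_nonneg _) hb.1).trans (ih ha.2 hb.2))

lemma holderWith_finsetProd {X : Type*} [PseudoMetricSpace X] {η : ℝ≥0} {K : ι → ℝ≥0}
    {g : ι → X → R} (hg : ∀ i ∈ s, ∀ x, ‖g i x‖ ≤ 1) (hK : ∀ i ∈ s, HolderWith (K i) η (g i)) :
    HolderWith (∑ i ∈ s, K i) η (fun x => ∏ i ∈ s, g i x) :=
  holderWith_of_dist_le fun x y => by
    rw [dist_eq_norm, NNReal.coe_sum, Finset.sum_mul]
    refine (norm_prod_sub_prod_le (fun i hi => hg i hi x) fun i hi => hg i hi y).trans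
      (Finset.sum_le_sum fun i hi => ?_)
    rw [← dist_eq_norm]
    exact (hK i hi).dist_le x y

end HolderProducts

section OrbitProducts

open UnitAddTorus

open scoped NNReal

variable {d : ℕ} {S : Matrix (Fin d) (Fin d) ℤ} {η : ℝ≥0}

section Finset

variable {ι : Type*} {s : Finset ι} {g : ι → Torus d → ℂ} {K : ι → ℝ≥0} {m : ι → ℤ}

lemma isHolderAlongUnstable_prod (hg : ∀ i x, ‖g i x‖ ≤ 1) (hK : ∀ i, HolderWith (K i) η (g i))
    (hm : ∀ i ∈ s, m i ≤ 0) :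
    IsHolderAlongUnstable S (∑ i ∈ s, K i) η (fun x => ∏ i ∈ s, g i (torusAut (S ^ m i) x)) := by
  intro v δ hδ hv x
  rw [NNReal.coe_sum, Finset.sum_mul]
  refine (norm_prod_sub_prod_le (fun i _ => hg i _) fun i _ => hg i _).trans
    (Finset.sum_le_sum fun i hi => norm_sub_le_of_holderWith (hK i) ?_)
  obtain ⟨j, hj⟩ := Int.eq_ofNat_of_zero_le (neg_nonneg.2 (hm i hi))
  have hpow : S ^ m i = S⁻¹ ^ j := by
    rw [← neg_neg (m i), hj, Matrix.zpow_neg_natCast, Matrix.inv_pow']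
  rw [← torusAut_sub, add_sub_cancel_left, hpow, torusAut_toTorus]
  exact norm_toTorus_le hδ (hv j)

lemma holderWith_prod_torusAut_zpow {Λ : ℝ≥0} (hΛ : 1 ≤ Λ)
    (hS : ∀ n, LipschitzWith (Λ ^ n) (torusAut (S ^ n))) {n : ℕ} (hg : ∀ i x, ‖g i x‖ ≤ 1)
    (hK : ∀ i, HolderWith (K i) η (g i)) (hm : ∀ i ∈ s, 0 ≤ m i ∧ m i ≤ n) :
    HolderWith ((∑ i ∈ s, K i) * (Λ ^ (η : ℝ)) ^ n) η
      (fun x => ∏ i ∈ s, g i (torusAut (S ^ m i) x)) := by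
  rw [Finset.sum_mul, ← NNReal.rpow_natCast, ← NNReal.rpow_mul, mul_comm, NNReal.rpow_mul,
    NNReal.rpow_natCast]
  refine holderWith_finsetProd (fun i _ x => hg i _) fun i hi => ?_
  obtain ⟨j, hj⟩ := Int.eq_ofNat_of_zero_le (hm i hi).1
  have hjn : j ≤ n := by have := (hm i hi).2; omega
  have hlip : LipschitzWith (Λ ^ n) (torusAut (S ^ m i)) := by
    rw [hj, zpow_natCast]
    exact (hS j).weaken (pow_le_pow_right₀ hΛ hjn)
  have hcomp := (hK i).comp hlip.holderWith
  rwa [mul_one] at hcomp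

end Finset

lemma continuous_prod_torusAut_zpow {ι : Type*} (s : Finset ι) {g : ι → Torus d → ℂ}
    (hg : ∀ i, Continuous (g i)) (m : ι → ℤ) :
    Continuous fun x => ∏ i ∈ s, g i (torusAut (S ^ m i) x) :=
  continuous_finsetProd _ fun i _ => (hg i).comp (continuous_torusAut _)

lemma covC_prod_torusAut_zpow_sub (hS : IsUnit S.det) {g : ℤ → Torus d → ℂ}
    (hg : ∀ k, Continuous (g k)) (I J : Finset ℤ) (n : ℤ) :
    covC volume (fun x => ∏ k ∈ I, g k (torusAut (S ^ (k - n)) x))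
        (fun x => ∏ k ∈ J, g k (torusAut (S ^ (k - n)) x)) =
      covC volume (fun x => ∏ k ∈ I, g k (torusAut (S ^ k) x))
        (fun x => ∏ k ∈ J, g k (torusAut (S ^ k) x)) := by
  rw [← covC_comp (measurePreserving_torusAut_zpow hS n)
    (continuous_prod_torusAut_zpow I hg fun k => k - n).aestronglyMeasurable
    (continuous_prod_torusAut_zpow J hg fun k => k - n).aestronglyMeasurable]
  simp only [← torusAut_zpow_add hS, sub_add_cancel]

theorem exists_norm_covC_prod_le (hS : IsUnit S.det) (hEig : NoRootOfUnityEigenvalue S)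
    (hη : 0 < η) :
    ∃ C Λ ρ : ℝ, 0 ≤ C ∧ 1 ≤ Λ ∧ 0 < ρ ∧ ρ < 1 ∧
      ∀ (I J : Finset ℤ) (g : ℤ → Torus d → ℂ) (K : ℤ → ℝ≥0) (n : ℤ) (p s : ℕ),
        (∀ k x, ‖g k x‖ ≤ 1) → (∀ k, HolderWith (K k) η (g k)) →
        (∀ k ∈ I, k ≤ n) → (∀ k ∈ J, n + p ≤ k ∧ k ≤ n + p + s) →
        ‖covC volume (fun x => ∏ k ∈ I, g k (torusAut (S ^ k) x))
            (fun x => ∏ k ∈ J, g k (torusAut (S ^ k) x))‖ ≤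
          C * (1 + ∑ k ∈ I, (K k : ℝ) + ∑ k ∈ J, (K k : ℝ)) * Λ ^ s * ρ ^ p := by
  obtain ⟨C, ρ, hC, hρ0, hρ1, hdecay⟩ := exists_norm_covC_comp_torusAut_le_pow hS hEig hη
  obtain ⟨Λ, hΛ, hlip⟩ := exists_lipschitzWith_torusAut_pow S
  have hΛη : 1 ≤ (Λ : ℝ) ^ (η : ℝ) := Real.one_le_rpow hΛ η.coe_nonneg
  refine ⟨C, (Λ : ℝ) ^ (η : ℝ), ρ, hC, hΛη, hρ0, hρ1, fun I J g K n p s hg hK hI hJ => ?_⟩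
  have hcont (k : ℤ) : Continuous (g k) := (hK k).continuous hη
  have hpast := isHolderAlongUnstable_prod (m := fun k => k - n) (S := S) (s := I) hg hK
    fun k hk => sub_nonpos.2 (hI k hk)
  have hfuture := holderWith_prod_torusAut_zpow (m := fun k => k - n - p) (s := J) (n := s)
    hΛ hlip hg hK fun k hk => by have := hJ k hk; omega
  have hcov := hdecay _ _ _ _ (continuous_prod_torusAut_zpow I hcont _)
    (fun x => norm_prod_le_one fun k _ => hg k _) (fun x => norm_prod_le_one fun k _ => hg k _)
    hpast hfuture p
  simp only [← zpow_natCast S p, ← torusAut_zpow_add hS, sub_add_cancel,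
    covC_prod_torusAut_zpow_sub hS hcont] at hcov
  have hconst : 1 + ∑ k ∈ I, (K k : ℝ) + (∑ k ∈ J, (K k : ℝ)) * ((Λ : ℝ) ^ (η : ℝ)) ^ s ≤
      (1 + ∑ k ∈ I, (K k : ℝ) + ∑ k ∈ J, (K k : ℝ)) * ((Λ : ℝ) ^ (η : ℝ)) ^ s := by
    have hI0 : 0 ≤ ∑ k ∈ I, (K k : ℝ) := Finset.sum_nonneg fun k _ => (K k).2
    nlinarith [one_le_pow₀ hΛη (n := s)]
  calc _ ≤ C * (1 + ∑ k ∈ I, (K k : ℝ) + (∑ k ∈ J, (K k : ℝ)) * ((Λ : ℝ) ^ (η : ℝ)) ^ s) *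
        ρ ^ p := by
        exact_mod_cast hcov
    _ ≤ C * ((1 + ∑ k ∈ I, (K k : ℝ) + ∑ k ∈ J, (K k : ℝ)) * ((Λ : ℝ) ^ (η : ℝ)) ^ s) *
        ρ ^ p := by gcongr
    _ = _ := by ring

end OrbitProducts

section CoinTossing

open scoped NNReal

/-- The outcome `±1` of a coin tossed with the help of a uniform variable `z`: heads, encoded as
`1`, occurs when `z ≤ t`, hence with probability `t`. -/
def coin (t z : ℝ) : ℝ := 2 * (if z ≤ t then (1 : ℝ) else 0) - 1

/-- The expectation of `F` at a `±1`-valued variable which equals `1` with probability `t`. -/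
def coinMean (F : ℝ → ℂ) (t : ℝ) : ℂ := t * F 1 + (1 - t) * F (-1)

lemma apply_coin {α : Type*} (F : ℝ → α) (t z : ℝ) :
    F (coin t z) = if z ≤ t then F 1 else F (-1) := by
  unfold coin
  split_ifs <;> norm_num

lemma abs_coin (t z : ℝ) : |coin t z| = 1 := by
  rw [apply_coin (|·|)]
  simp

lemma measurable_apply_coin {α : Type*} [MeasurableSpace α] (F : ℝ → α) :
    Measurable fun x : ℝ × ℝ => F (coin x.1 x.2) := by
  simp only [apply_coin F]
  exact Measurable.ite (measurableSet_le measurable_snd measurable_fst) measurable_const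
    measurable_const

lemma norm_apply_coin_le (F : ℝ → ℂ) (t z : ℝ) : ‖F (coin t z)‖ ≤ ‖F 1‖ + ‖F (-1)‖ := by
  rw [apply_coin F]
  split_ifs <;> simp

lemma norm_coinMean_le {F : ℝ → ℂ} (h₁ : ‖F 1‖ ≤ 1) (h₂ : ‖F (-1)‖ ≤ 1) {t : ℝ}
    (ht : t ∈ Set.Icc (0 : ℝ) 1) : ‖coinMean F t‖ ≤ 1 := by
  have hmem := convex_closedBall (0 : ℂ) 1 (mem_closedBall_zero_iff.2 h₁)
    (mem_closedBall_zero_iff.2 h₂) ht.1 (sub_nonneg.2 ht.2) (add_sub_cancel t 1)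
  simpa [coinMean] using hmem

lemma lipschitzWith_coinMean (F : ℝ → ℂ) : LipschitzWith ‖F 1 - F (-1)‖₊ (coinMean F) :=
  LipschitzWith.of_dist_le_mul fun t u => by
    have hsub : coinMean F t - coinMean F u = (F 1 - F (-1)) * ((t - u : ℝ) : ℂ) := by
      unfold coinMean
      push_cast
      ring
    rw [dist_eq_norm, hsub, norm_mul, Complex.norm_real, coe_nnnorm, dist_eq_norm t]

lemma holderWith_coinMean_comp {X : Type*} [PseudoEMetricSpace X] {K η : ℝ≥0} {f : X → ℝ}
    (hf : HolderWith K η f) (F : ℝ → ℂ) :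
    HolderWith (‖F 1 - F (-1)‖₊ * K) η (fun x => coinMean F (f x)) := by
  have hcomp := (lipschitzWith_coinMean F).holderWith.comp hf
  rwa [NNReal.coe_one, NNReal.rpow_one, one_mul] at hcomp

lemma integral_uniform_apply_coin (F : ℝ → ℂ) {t : ℝ} (ht : t ∈ Set.Icc (0 : ℝ) 1) :
    ∫ z in Set.Ioo (0 : ℝ) 1, F (coin t z) = coinMean F t := by
  have hind (z : ℝ) : F (coin t z) =
      F (-1) + (Set.Iic t).indicator (fun _ => F 1 - F (-1)) z := by
    rw [apply_coin F, Set.indicator_apply]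
    simp only [Set.mem_Iic]
    split_ifs <;> ring
  have hset : Set.Iic t ∩ Set.Ioc 0 1 = Set.Ioc 0 t := by
    ext z
    simp only [Set.mem_inter_iff, Set.mem_Iic, Set.mem_Ioc]
    exact ⟨fun h => ⟨h.2.1, h.1⟩, fun h => ⟨h.2, h.1, h.2.trans ht.2⟩⟩
  simp only [hind]
  rw [← integral_Ioc_eq_integral_Ioo, integral_add (integrable_const _)
    ((integrable_const _).indicator measurableSet_Iic), integral_indicator_const _
    measurableSet_Iic, measureReal_restrict_apply measurableSet_Iic, hset]
  simp [coinMean, Real.volume_real_Ioc_of_le ht.1]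
  ring

section Environment

variable {M ι : Type*} [MeasurableSpace M] {ν : Measure M} {μ₁ : Measure (ℤ → ℝ)}
  {p : ℤ → M → ℝ} {e : ι → ℤ}

lemma integral_prod_apply_coin (hμ₁ : IsIIDUniform μ₁) (he : Function.Injective e) (I : Finset ι)
    (F : ι → ℝ → ℂ) {t : ι → ℝ} (ht : ∀ i, t i ∈ Set.Icc (0 : ℝ) 1) :
    ∫ z, ∏ i ∈ I, F i (coin (t i) (z (e i))) ∂μ₁ = ∏ i ∈ I, coinMean (F i) (t i) := by
  obtain ⟨-, hind, hlaw⟩ := hμ₁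
  have hmeas (i : ι) : Measurable fun z : ℝ => F i (coin (t i) z) :=
    (measurable_apply_coin (F i)).comp measurable_prodMk_left
  have hindI : iIndepFun (fun (i : I) (z : ℤ → ℝ) => z (e i)) μ₁ :=
    hind.precomp (he.comp Subtype.val_injective)
  calc ∫ z, ∏ i ∈ I, F i (coin (t i) (z (e i))) ∂μ₁
      = ∫ z, ∏ i : I, F i (coin (t i) (z (e i))) ∂μ₁ := by
        congr 1 with z
        exact (Finset.prod_coe_sort I fun i => F i (coin (t i) (z (e i)))).symm
    _ = ∏ i : I, ∫ z, F i (coin (t i) (z (e i))) ∂μ₁ :=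
        hindI.integral_fun_prod_comp (f := fun (i : I) z => F i (coin (t i) z))
          (fun i => (measurable_pi_apply (e i)).aemeasurable)
          (fun i => (hmeas i).aestronglyMeasurable)
    _ = ∏ i : I, coinMean (F i) (t i) := Finset.prod_congr rfl fun i _ => by
        rw [← integral_uniform_apply_coin (F i) (ht i), ← hlaw (e i),
          integral_map (measurable_pi_apply _).aemeasurable (hmeas i).aestronglyMeasurable]
    _ = ∏ i ∈ I, coinMean (F i) (t i) := Finset.prod_coe_sort I fun i => coinMean (F i) (t i)

/-- The `±1`-valued scenery in the random environment `p`: a point of the probability space is an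
environment `x.1` together with a sequence `x.2` of uniform variables, and the coin tossed at site
`k` shows heads with probability `p k x.1`. -/
def coinToss {M : Type*} (p : ℤ → M → ℝ) (k : ℤ) (x : M × (ℤ → ℝ)) : ℝ :=
  coin (p k x.1) (x.2 k)

lemma measurable_apply_coinToss {k : ℤ} (hp : Measurable (p k)) {α : Type*} [MeasurableSpace α]
    (F : ℝ → α) : Measurable fun x => F (coinToss p k x) :=
  (measurable_apply_coin F).comp
    ((hp.comp measurable_fst).prodMk ((measurable_pi_apply k).comp measurable_snd))

lemma integrable_prod_coinToss (hp : ∀ k, Measurable (p k)) {μ : Measure (M × (ℤ → ℝ))}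
    [IsFiniteMeasure μ] (I : Finset ι) (F : ι → ℝ → ℂ) :
    Integrable (fun x => ∏ i ∈ I, F i (coinToss p (e i) x)) μ := by
  refine Integrable.of_bound (Finset.measurable_fun_prod I fun i _ =>
      measurable_apply_coinToss (hp (e i)) (F i)).aestronglyMeasurable
    (∏ i ∈ I, (‖F i 1‖ + ‖F i (-1)‖)) (ae_of_all _ fun x => ?_)
  rw [norm_prod]
  exact Finset.prod_le_prod (fun _ _ => norm_nonneg _) fun i _ => norm_apply_coin_le (F i) _ _

lemma integral_prod_coinToss [IsFiniteMeasure ν] (hμ₁ : IsIIDUniform μ₁)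
    (hp : ∀ k, Measurable (p k)) (hrange : ∀ k x, p k x ∈ Set.Icc (0 : ℝ) 1)
    (he : Function.Injective e) (I : Finset ι) (F : ι → ℝ → ℂ) :
    ∫ x, ∏ i ∈ I, F i (coinToss p (e i) x) ∂(ν.prod μ₁) =
      ∫ x, ∏ i ∈ I, coinMean (F i) (p (e i) x) ∂ν := by
  have := hμ₁.1
  rw [integral_prod _ (integrable_prod_coinToss hp I F)]
  congr 1 with x
  exact integral_prod_apply_coin hμ₁ he I F fun i => hrange (e i) x

lemma covC_prod_coinToss [IsFiniteMeasure ν] (hμ₁ : IsIIDUniform μ₁) (hp : ∀ k, Measurable (p k))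
    (hrange : ∀ k x, p k x ∈ Set.Icc (0 : ℝ) 1) (he : Function.Injective e) {I J : Finset ι}
    (hIJ : Disjoint I J) (F : ι → ℝ → ℂ) :
    covC (ν.prod μ₁) (fun x => ∏ i ∈ I, F i (coinToss p (e i) x))
        (fun x => ∏ i ∈ J, F i (coinToss p (e i) x)) =
      covC ν (fun x => ∏ i ∈ I, coinMean (F i) (p (e i) x))
        (fun x => ∏ i ∈ J, coinMean (F i) (p (e i) x)) := by
  classical
  simp only [covC, ← Finset.prod_union hIJ, integral_prod_coinToss hμ₁ hp hrange he]

lemma measurePreserving_reindex (hμ₁ : IsIIDUniform μ₁) {e : ℤ → ℤ}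
    (he : Function.Injective e) : MeasurePreserving (fun (z : ℤ → ℝ) k => z (e k)) μ₁ μ₁ := by
  obtain ⟨_, hind, hlaw⟩ := hμ₁
  refine ⟨measurable_pi_lambda _ fun k => measurable_pi_apply _, ?_⟩
  have hlaw_id := hind.map_fun_eq_infinitePi_map fun k => measurable_pi_apply k
  have hlaw_reindex := (hind.precomp he).map_fun_eq_infinitePi_map fun k =>
    measurable_pi_apply (e k)
  simp only [hlaw] at hlaw_id hlaw_reindex
  exact hlaw_reindex.trans (hlaw_id.symm.trans Measure.map_id)

lemma isStationarySeq_coinToss [SFinite ν] (hμ₁ : IsIIDUniform μ₁) (hp : ∀ k, Measurable (p k))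
    {θ : ℤ → M → M} (hθ : ∀ j, MeasurePreserving (θ j) ν ν)
    (hpθ : ∀ j k x, p (k + j) x = p k (θ j x)) :
    IsStationarySeq (ν.prod μ₁) (coinToss p) := fun j q k => by
  have := hμ₁.1
  have hshift := (hθ j).prod (measurePreserving_reindex hμ₁ (add_left_injective j))
  have hmeas : Measurable fun (x : M × (ℤ → ℝ)) (i : Fin q) => coinToss p (k i) x :=
    measurable_pi_lambda _ fun i => measurable_apply_coinToss (hp (k i)) id
  conv_rhs => rw [← hshift.map_eq, Measure.map_map hmeas hshift.measurable]
  congr 1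
  ext x i
  simp only [coinToss, hpθ, Function.comp_apply, Prod.map_fst, Prod.map_snd]

lemma integral_coinToss [IsProbabilityMeasure ν] (hμ₁ : IsIIDUniform μ₁)
    (hp : ∀ k, Measurable (p k)) (hrange : ∀ k x, p k x ∈ Set.Icc (0 : ℝ) 1) (k : ℤ) :
    ∫ x, coinToss p k x ∂(ν.prod μ₁) = 2 * (∫ x, p k x ∂ν) - 1 := by
  have hmean (t : ℝ) : coinMean (fun s => (s : ℂ)) t = ((2 * t - 1 : ℝ) : ℂ) := by
    unfold coinMean
    push_cast
    ring
  have hint : Integrable (p k) ν := Integrable.of_mem_Icc 0 1 (hp k).aemeasurable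
    (ae_of_all _ (hrange k))
  have h := integral_prod_coinToss (ν := ν) hμ₁ hp hrange Function.injective_id {k}
    fun _ s => (s : ℂ)
  simp only [Finset.prod_singleton, id, hmean, integral_complex_ofReal] at h
  rw [Complex.ofReal_injective h, integral_sub (hint.const_mul 2) (integrable_const 1),
    integral_const_mul, integral_const, probReal_univ, one_smul]

lemma cond3_coinToss [IsProbabilityMeasure ν] (hμ₁ : IsIIDUniform μ₁)
    (hp : ∀ k, Measurable (p k)) (hrange : ∀ k x, p k x ∈ Set.Icc (0 : ℝ) 1)
    (hmean : ∀ k, ∫ x, p k x ∂ν = 1 / 2) {θ : ℤ → M → M}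
    (hθ : ∀ j, MeasurePreserving (θ j) ν ν) (hpθ : ∀ j k x, p (k + j) x = p k (θ j x)) :
    Cond3 (ν.prod μ₁) (coinToss p) := by
  have := hμ₁.1
  refine ⟨isStationarySeq_coinToss hμ₁ hp hθ hpθ, fun k => ?_, fun k => ?_⟩
  · rw [integral_coinToss hμ₁ hp hrange, hmean]
    norm_num
  · refine Integrable.of_bound
      (measurable_apply_coinToss (hp k) fun t => t ^ 4).aestronglyMeasurable 1
      (ae_of_all _ fun x => ?_)
    rw [Real.norm_eq_abs, abs_pow, coinToss, abs_coin, one_pow]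

end Environment

end CoinTossing

section ExponentialMixing

variable {Ω : Type*} [MeasurableSpace Ω] {μ : Measure Ω} {ξ : ℤ → Ω → ℝ} {C Λ ρ : ℝ}

/-- Functions of a past block of a `±1`-valued sequence `ξ` and of a block of length `s` lying `p`
steps ahead have covariance `O(Λ ^ s * ρ ^ p)`, linearly in the oscillations of the factors. -/
def MixingBound (μ : Measure Ω) (ξ : ℤ → Ω → ℝ) (C Λ ρ : ℝ) : Prop :=
  ∀ (I J : Finset ℤ) (F : ℤ → ℝ → ℂ) (n : ℤ) (p s : ℕ), 1 ≤ p →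
    (∀ k, ‖F k 1‖ ≤ 1) → (∀ k, ‖F k (-1)‖ ≤ 1) →
    (∀ k ∈ I, k ≤ n) → (∀ k ∈ J, n + p ≤ k ∧ k ≤ n + p + s) →
    ‖covC μ (fun ω => ∏ k ∈ I, F k (ξ k ω)) (fun ω => ∏ k ∈ J, F k (ξ k ω))‖ ≤
      C * (1 + ∑ k ∈ I, ‖F k 1 - F k (-1)‖ + ∑ k ∈ J, ‖F k 1 - F k (-1)‖) * Λ ^ s * ρ ^ p

/-- A `±1`-valued sequence is exponentially mixing if its past and its future decorrelate
exponentially fast in their distance, at a cost exponential in the length of the future block. -/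
def IsExpMixing (μ : Measure Ω) (ξ : ℤ → Ω → ℝ) : Prop :=
  ∃ C Λ ρ : ℝ, 0 ≤ C ∧ 1 ≤ Λ ∧ 0 < ρ ∧ ρ < 1 ∧ MixingBound μ ξ C Λ ρ

section CharacteristicFunctions

lemma norm_exp_I_mul_sub_exp_neg_le (a : ℝ) :
    ‖Complex.exp (Complex.I * ((a * 1 : ℝ) : ℂ)) -
      Complex.exp (Complex.I * ((a * (-1) : ℝ) : ℂ))‖ ≤ 2 * |a| := by
  have hpos := Real.norm_exp_I_mul_ofReal_sub_one_le (x := a * 1)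
  have hneg := Real.norm_exp_I_mul_ofReal_sub_one_le (x := a * (-1))
  have hsub := norm_sub_le (Complex.exp (Complex.I * ((a * 1 : ℝ) : ℂ)) - 1)
    (Complex.exp (Complex.I * ((a * (-1) : ℝ) : ℂ)) - 1)
  rw [sub_sub_sub_cancel_right] at hsub
  simp only [mul_one, mul_neg_one, norm_neg, Real.norm_eq_abs] at hpos hneg hsub ⊢
  linarith

lemma norm_exp_I_mul_ofReal (t : ℝ) : ‖Complex.exp (Complex.I * (t : ℂ))‖ = 1 := by
  rw [mul_comm, Complex.norm_exp_ofReal_mul_I]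

lemma exp_I_mul_sum_eq_prod {s : Finset ℕ} {α : ℕ → ℝ} {γ : ℤ → ℝ} (h : ∀ k ∈ s, γ k = α k)
    (x : ℤ → ℝ) :
    Complex.exp (Complex.I * ((∑ k ∈ s, α k * x k : ℝ) : ℂ)) =
      ∏ k ∈ s.map Nat.castEmbedding, Complex.exp (Complex.I * ((γ k * x k : ℝ) : ℂ)) := by
  rw [Complex.ofReal_sum, Finset.mul_sum, Complex.exp_sum, Finset.prod_map]
  refine Finset.prod_congr rfl fun k hk => ?_
  rw [Nat.castEmbedding_apply, h k hk]

lemma sum_norm_exp_sub_exp_neg_le {s : Finset ℕ} {α : ℕ → ℝ} {γ : ℤ → ℝ}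
    (h : ∀ k ∈ s, γ k = α k) :
    ∑ k ∈ s.map Nat.castEmbedding, ‖Complex.exp (Complex.I * ((γ k * 1 : ℝ) : ℂ)) -
      Complex.exp (Complex.I * ((γ k * (-1) : ℝ) : ℂ))‖ ≤ 2 * ∑ k ∈ s, |α k| := by
  rw [Finset.sum_map, Finset.mul_sum]
  refine Finset.sum_le_sum fun k hk => ?_
  rw [← h k hk]
  exact norm_exp_I_mul_sub_exp_neg_le _

lemma tendsto_sqrt_mul_geometric {θ : ℝ} (h0 : 0 ≤ θ) (h1 : θ < 1) :
    Tendsto (fun s : ℕ => √s * θ ^ s) atTop (nhds 0) := by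
  refine squeeze_zero (fun s => by positivity) (fun s => ?_)
    (tendsto_pow_const_mul_const_pow_of_abs_lt_one 1 (by rwa [abs_of_nonneg h0]))
  rw [pow_one]
  gcongr
  exact Real.sqrt_le_iff.2 ⟨s.cast_nonneg, by exact_mod_cast Nat.le_self_pow two_ne_zero s⟩

lemma MixingBound.cond5Bound [IsProbabilityMeasure μ] (h : MixingBound μ ξ C Λ ρ) (hC : 0 ≤ C)
    (hΛ : 1 ≤ Λ) (hρ : 0 ≤ ρ) : Cond5Bound μ ξ (2 * C + 2) fun p s => Λ ^ s * ρ ^ p := by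
  intro n₁ n₂ n₃ n₄ _ h₂₃ _ α β
  set a := ∑ k ∈ Finset.Icc n₁ n₂, |α k|
  set b := ∑ k ∈ Finset.Icc n₃ n₄, |β k|
  have ha : 0 ≤ a := Finset.sum_nonneg fun _ _ => abs_nonneg _
  have hb : 0 ≤ b := Finset.sum_nonneg fun _ _ => abs_nonneg _
  rcases h₂₃.eq_or_lt with rfl | hlt
  · refine (norm_covC_le_two (fun _ => (norm_exp_I_mul_ofReal _).le)
      fun _ => (norm_exp_I_mul_ofReal _).le).trans ?_
    simp only [Nat.sub_self, pow_zero, mul_one]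
    calc (2 : ℝ) = 2 * 1 * 1 := by norm_num
      _ ≤ (2 * C + 2) * (1 + a + b) * Λ ^ (n₄ - n₂) := by
          gcongr
          · linarith
          · linarith
          · exact one_le_pow₀ hΛ
  let γ : ℤ → ℝ := fun k => if k ≤ n₂ then α k.toNat else β k.toNat
  have hγα : ∀ k ∈ Finset.Icc n₁ n₂, γ k = α k := fun k hk => by
    simp [γ, (Finset.mem_Icc.1 hk).2]
  have hγβ : ∀ k ∈ Finset.Icc n₃ n₄, γ k = β k := fun k hk => by
    simp [γ, hlt.trans_le (Finset.mem_Icc.1 hk).1]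
  have hmix := h ((Finset.Icc n₁ n₂).map Nat.castEmbedding)
    ((Finset.Icc n₃ n₄).map Nat.castEmbedding)
    (fun k t => Complex.exp (Complex.I * ((γ k * t : ℝ) : ℂ))) n₂ (n₃ - n₂) (n₄ - n₃) (by omega)
    (fun _ => (norm_exp_I_mul_ofReal _).le) (fun _ => (norm_exp_I_mul_ofReal _).le)
    (by simp; omega) (by simp; omega)
  have hα ω := exp_I_mul_sum_eq_prod hγα fun k => ξ k ω
  have hβ ω := exp_I_mul_sum_eq_prod hγβ fun k => ξ k ω
  simp only [hα, hβ]
  refine hmix.trans ?_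
  rw [mul_assoc _ (Λ ^ _)]
  gcongr ?_ * _
  calc _ ≤ C * (1 + 2 * a + 2 * b) := by
        gcongr
        · exact sum_norm_exp_sub_exp_neg_le hγα
        · exact sum_norm_exp_sub_exp_neg_le hγβ
    _ ≤ (2 * C + 2) * (1 + a + b) := by nlinarith

lemma IsExpMixing.cond5 [IsProbabilityMeasure μ] (h : IsExpMixing μ ξ) : Cond5 μ ξ := by
  obtain ⟨C, Λ, ρ, hC, hΛ, hρ, hρ1, hbound⟩ := h
  have hΛ0 : 0 < Λ := one_pos.trans_le hΛ
  obtain ⟨r, hr⟩ := exists_pow_lt_of_lt_one (inv_pos.2 hΛ0) hρ1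
  have hθ : Λ * ρ ^ (r + 1) < 1 :=
    calc Λ * ρ ^ (r + 1) ≤ Λ * ρ ^ r := mul_le_mul_of_nonneg_left
          (pow_le_pow_of_le_one hρ.le hρ1.le (Nat.le_succ r)) hΛ0.le
      _ < Λ * Λ⁻¹ := by gcongr
      _ = 1 := mul_inv_cancel₀ hΛ0.ne'
  refine ⟨2 * C + 2, by positivity, fun p s => Λ ^ s * ρ ^ p, r + 1, Nat.le_add_left 1 r,
    fun p s => by positivity, fun p s => ?_, ?_, hbound.cond5Bound hC hΛ hρ.le⟩
  · exact mul_le_mul_of_nonneg_left (pow_le_pow_of_le_one hρ.le hρ1.le (Nat.le_succ p))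
      (by positivity)
  · refine (tendsto_sqrt_mul_geometric (by positivity) hθ).congr fun s => ?_
    simp only [mul_pow, pow_mul]

end CharacteristicFunctions

section Moments

/-- The mixed moment `𝔼[∏ ξ k]` over a multiset of times `k`. -/
def mixedMoment (μ : Measure Ω) (ξ : ℤ → Ω → ℝ) (A : Multiset ℤ) : ℝ :=
  ∫ ω, (A.map (ξ · ω)).prod ∂μ

lemma mixedMoment_comp_neg (A : Multiset ℤ) :
    mixedMoment μ (fun k => ξ (-k)) A = mixedMoment μ ξ (A.map Neg.neg) := by
  simp only [mixedMoment, Multiset.map_map, Function.comp_apply]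

lemma abs_mixedMoment_le_one [IsProbabilityMeasure μ] (habs : ∀ k ω, |ξ k ω| = 1)
    (A : Multiset ℤ) : |mixedMoment μ ξ A| ≤ 1 := by
  have hprod ω : |(A.map (ξ · ω)).prod| = 1 := by
    change absHom _ = 1
    rw [map_multiset_prod]
    simp [absHom, habs]
  exact norm_integral_le_one (f := fun ω => (A.map (ξ · ω)).prod) fun ω => (hprod ω).le

lemma covC_ofReal (U V : Ω → ℝ) : covC μ (fun ω => (U ω : ℂ)) (fun ω => (V ω : ℂ)) =
    ((∫ ω, U ω * V ω ∂μ - (∫ ω, U ω ∂μ) * ∫ ω, V ω ∂μ : ℝ) : ℂ) := by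
  simp only [covC, ← Complex.ofReal_mul, integral_complex_ofReal, Complex.ofReal_sub]

lemma prod_pow_count_add_left {A B : Multiset ℤ} (hAB : Disjoint A B) (x : ℤ → ℝ) :
    ∏ k ∈ A.toFinset, (x k : ℂ) ^ (A + B).count k = (((A.map x).prod : ℝ) : ℂ) := by
  rw [Finset.prod_multiset_map_count, Complex.ofReal_prod]
  refine Finset.prod_congr rfl fun k hk => ?_
  rw [Multiset.count_add, Multiset.count_eq_zero_of_notMem
    (Multiset.disjoint_left.1 hAB (Multiset.mem_toFinset.1 hk)), add_zero, Complex.ofReal_pow]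

lemma covC_prod_pow_count {A B : Multiset ℤ} (hAB : Disjoint A B) :
    covC μ (fun ω => ∏ k ∈ A.toFinset, (ξ k ω : ℂ) ^ (A + B).count k)
        (fun ω => ∏ k ∈ B.toFinset, (ξ k ω : ℂ) ^ (A + B).count k) =
      ((mixedMoment μ ξ (A + B) - mixedMoment μ ξ A * mixedMoment μ ξ B : ℝ) : ℂ) := by
  have hA ω := prod_pow_count_add_left hAB (ξ · ω)
  have hB ω := prod_pow_count_add_left hAB.symm (ξ · ω)
  simp only [add_comm B A] at hB
  simp only [hA, hB, covC_ofReal, mixedMoment, Multiset.map_add, Multiset.prod_add]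

lemma MixingBound.abs_mixedMoment_add_sub_le (h : MixingBound μ ξ C Λ ρ) (hC : 0 ≤ C) (hΛ : 0 ≤ Λ)
    (hρ : 0 ≤ ρ) {A B : Multiset ℤ} {n : ℤ} {p s : ℕ} (hp : 1 ≤ p) (hA : ∀ k ∈ A, k ≤ n)
    (hB : ∀ k ∈ B, n + p ≤ k ∧ k ≤ n + p + s) :
    |mixedMoment μ ξ (A + B) - mixedMoment μ ξ A * mixedMoment μ ξ B| ≤
      C * (1 + 2 * A.card + 2 * B.card) * Λ ^ s * ρ ^ p := by
  have hAB : Disjoint A B := Multiset.disjoint_left.2 fun {k} hkA hkB => by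
    have := hA k hkA
    have := (hB k hkB).1
    omega
  let F : ℤ → ℝ → ℂ := fun k t => (t : ℂ) ^ (A + B).count k
  have hosc (D : Multiset ℤ) : ∑ k ∈ D.toFinset, ‖F k 1 - F k (-1)‖ ≤ 2 * D.card := by
    have hterm (k : ℤ) : ‖F k 1 - F k (-1)‖ ≤ 2 :=
      (norm_sub_le _ _).trans_eq (by norm_num [F])
    calc _ ≤ D.toFinset.card • (2 : ℝ) := Finset.sum_le_card_nsmul _ _ 2 fun k _ => hterm k
      _ ≤ 2 * D.card := by
        rw [nsmul_eq_mul, mul_comm]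
        gcongr
        exact D.toFinset_card_le
  have hmix := h A.toFinset B.toFinset F n p s hp (fun k => by simp [F]) (fun k => by simp [F])
    (by simpa using hA) (by simpa using hB)
  rw [covC_prod_pow_count hAB, Complex.norm_real, Real.norm_eq_abs] at hmix
  refine hmix.trans ?_
  gcongr
  · exact hosc A
  · exact hosc B

lemma IsExpMixing.exists_abs_mixedMoment_add_singleton_le [IsProbabilityMeasure μ]
    (h : IsExpMixing μ ξ) (habs : ∀ k ω, |ξ k ω| = 1) (hcent : ∀ k, ∫ ω, ξ k ω ∂μ = 0) :
    ∃ C ρ : ℝ, 0 ≤ C ∧ 0 < ρ ∧ ρ < 1 ∧ ∀ (A : Multiset ℤ) (n : ℤ) (p : ℕ), (∀ k ∈ A, k ≤ n) →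
      |mixedMoment μ ξ (A + {n + (p : ℤ)})| ≤ C * (1 + A.card) * ρ ^ p := by
  obtain ⟨C, Λ, ρ, hC, hΛ, hρ, hρ1, hbound⟩ := h
  refine ⟨3 * C + 1, ρ, by positivity, hρ, hρ1, fun A n p hA => ?_⟩
  rcases Nat.eq_zero_or_pos p with rfl | hp
  · refine (abs_mixedMoment_le_one habs _).trans ?_
    rw [pow_zero, mul_one]
    nlinarith [A.card.cast_nonneg (α := ℝ)]
  have hcov := hbound.abs_mixedMoment_add_sub_le hC (by linarith) hρ.le (s := 0) hp hA
    (B := {n + (p : ℤ)}) (by simp)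
  have hsingle : mixedMoment μ ξ {n + (p : ℤ)} = 0 := by simp [mixedMoment, hcent]
  rw [hsingle, mul_zero, sub_zero, pow_zero, mul_one, Multiset.card_singleton] at hcov
  refine hcov.trans ?_
  gcongr ?_ * _
  push_cast
  nlinarith [A.card.cast_nonneg (α := ℝ)]

lemma le_mul_sqrt_pow_mul_sqrt_pow {x D σ : ℝ} {m n : ℕ} (hx : 0 ≤ x) (hD : 0 ≤ D) (hσ : 0 ≤ σ)
    (hm : x ≤ D * σ ^ m) (hn : x ≤ D * σ ^ n) : x ≤ D * (√σ ^ m * √σ ^ n) := by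
  refine le_of_sq_le_sq ?_ (by positivity)
  calc x ^ 2 = x * x := sq _
    _ ≤ (D * σ ^ m) * (D * σ ^ n) := by gcongr
    _ = (D * (√σ ^ m * √σ ^ n)) ^ 2 := by
      rw [mul_pow, mul_pow (√σ ^ _), pow_right_comm, pow_right_comm (√σ) n, Real.sq_sqrt hσ]
      ring

lemma exists_abs_mixedMoment_four_le [IsProbabilityMeasure μ] (h : IsExpMixing μ ξ)
    (hneg : IsExpMixing μ fun k => ξ (-k)) (habs : ∀ k ω, |ξ k ω| = 1)
    (hcent : ∀ k, ∫ ω, ξ k ω ∂μ = 0) :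
    ∃ C κ : ℝ, 0 ≤ C ∧ 0 ≤ κ ∧ κ < 1 ∧ ∀ a b c e : ℕ, a ≤ b → b ≤ c → c ≤ e →
      |mixedMoment μ ξ {(a : ℤ), (b : ℤ), (c : ℤ), (e : ℤ)}| ≤
        C * (κ ^ Nat.dist a b * κ ^ Nat.dist c e) := by
  obtain ⟨C, ρ, hC, hρ, hρ1, hlast⟩ := h.exists_abs_mixedMoment_add_singleton_le habs hcent
  obtain ⟨C', ρ', _, hρ', hρ1', hfirst⟩ :=
    hneg.exists_abs_mixedMoment_add_singleton_le (fun k => habs (-k)) fun k => hcent (-k)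
  set D := max C C'
  set σ := max ρ ρ'
  have : 0 ≤ D := hC.trans (le_max_left _ _)
  have hσ : 0 ≤ σ := hρ.le.trans (le_max_left _ _)
  refine ⟨4 * D, √σ, by positivity, Real.sqrt_nonneg _,
    (Real.sqrt_lt' one_pos).2 (by rw [one_pow]; exact max_lt hρ1 hρ1'),
    fun a b c e hab hbc hce => ?_⟩
  set E := |mixedMoment μ ξ {(a : ℤ), (b : ℤ), (c : ℤ), (e : ℤ)}| with hE
  have hce' : E ≤ 4 * D * σ ^ (e - c) := by
    have hle := hlast {(a : ℤ), (b : ℤ), (c : ℤ)} c (e - c) (by simp; omega)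
    have he : (c : ℤ) + (e - c : ℕ) = e := by omega
    calc E ≤ C * (1 + 3) * ρ ^ (e - c) := by simpa [he, hE, mul_comm] using hle
      _ ≤ D * (1 + 3) * σ ^ (e - c) := by gcongr <;> exact le_max_left _ _
      _ = _ := by ring
  have hab' : E ≤ 4 * D * σ ^ (b - a) := by
    have hle := hfirst {-(e : ℤ), -(c : ℤ), -(b : ℤ)} (-b) (b - a) (by simp; omega)
    have ha : -(b : ℤ) + (b - a : ℕ) = -a := by omega
    have hperm : Multiset.map Neg.neg ({-(e : ℤ), -(c : ℤ), -(b : ℤ)} + {-(a : ℤ)}) =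
        {(a : ℤ), (b : ℤ), (c : ℤ), (e : ℤ)} := by
      simp only [Multiset.map_add, Multiset.insert_eq_cons, Multiset.map_cons,
        Multiset.map_singleton, neg_neg]
      exact Multiset.coe_eq_coe.2 (List.reverse_perm [(a : ℤ), b, c, e])
    rw [mixedMoment_comp_neg, ha, hperm] at hle
    calc E ≤ C' * (1 + 3) * ρ' ^ (b - a) := by simpa [hE] using hle
      _ ≤ D * (1 + 3) * σ ^ (b - a) := by gcongr <;> exact le_max_right _ _
      _ = _ := by ring
  rw [Nat.dist_eq_sub_of_le hab, Nat.dist_eq_sub_of_le hce]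
  exact le_mul_sqrt_pow_mul_sqrt_pow (abs_nonneg _) (by positivity) hσ hab' hce'

end Moments

end ExponentialMixing

section Combinatorics

lemma sum_pow_injOn_le {κ : ℝ} (h0 : 0 ≤ κ) (h1 : κ < 1) {ι : Type*} {s : Finset ι} {u : ι → ℕ}
    (hu : Set.InjOn u s) : ∑ b ∈ s, κ ^ u b ≤ (1 - κ)⁻¹ := by
  classical
  rw [← Finset.sum_image (g := u) (f := fun j => κ ^ j) hu, ← tsum_geometric_of_lt_one h0 h1]
  exact (summable_geometric_of_lt_one h0 h1).sum_le_tsum _ fun _ _ => by positivity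

lemma sum_pow_dist_le {κ : ℝ} (h0 : 0 ≤ κ) (h1 : κ < 1) (s : Finset ℕ) (a : ℕ) :
    ∑ b ∈ s, κ ^ Nat.dist a b ≤ 2 * (1 - κ)⁻¹ := by
  rw [← Finset.sum_filter_add_sum_filter_not _ (fun b => b ≤ a), two_mul]
  refine add_le_add (sum_pow_injOn_le h0 h1 ?_) (sum_pow_injOn_le h0 h1 ?_) <;>
  · intro x hx y hy hxy
    simp only [Finset.coe_filter, Set.mem_ofPred_eq, Nat.dist] at hx hy hxy
    omega

lemma sum_sum_pow_dist_le {κ : ℝ} (h0 : 0 ≤ κ) (h1 : κ < 1) (N : ℕ) :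
    ∑ a ∈ Finset.range N, ∑ b ∈ Finset.range N, κ ^ Nat.dist a b ≤ N * (2 * (1 - κ)⁻¹) := by
  simpa using Finset.sum_le_card_nsmul _ _ _ fun a (_ : a ∈ Finset.range N) =>
    sum_pow_dist_le h0 h1 (Finset.range N) a

lemma forall_of_sorted {α : Type*} [LinearOrder α] {P : α → α → α → α → Prop}
    (h₁₂ : ∀ a b c e, P a b c e → P b a c e) (h₂₃ : ∀ a b c e, P a b c e → P a c b e)
    (h₃₄ : ∀ a b c e, P a b c e → P a b e c)
    (hsorted : ∀ a b c e, a ≤ b → b ≤ c → c ≤ e → P a b c e) (a b c e : α) : P a b c e := by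
  have insert_fourth {a b c : α} (hab : a ≤ b) (hbc : b ≤ c) (e : α) : P a b c e := by
    rcases le_total c e with hce | hec
    · exact hsorted a b c e hab hbc hce
    apply h₃₄
    rcases le_total b e with hbe | heb
    · exact hsorted a b e c hab hbe hec
    apply h₂₃
    rcases le_total a e with hae | hea
    · exact hsorted a e b c hae heb hbc
    · exact h₁₂ _ _ _ _ (hsorted e a b c hea hab hbc)
  have insert_third {a b : α} (hab : a ≤ b) (c e : α) : P a b c e := by
    rcases le_total b c with hbc | hcb
    · exact insert_fourth hab hbc e
    apply h₂₃
    rcases le_total a c with hac | hca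
    · exact insert_fourth hac hcb e
    · exact h₁₂ _ _ _ _ (insert_fourth hca hab e)
  rcases le_total a b with hab | hba
  · exact insert_third hab c e
  · exact h₁₂ _ _ _ _ (insert_third hba c e)

/-- The sum over the three pairings of four indices of the products of the pair weights `g`. -/
def pairingSum {α : Type*} (g : α → α → ℝ) (a b c e : α) : ℝ :=
  g a b * g c e + g a c * g b e + g a e * g b c

lemma le_pairingSum {α : Type*} [LinearOrder α] {g : α → α → ℝ} (hg : ∀ a b, 0 ≤ g a b)
    (hgc : ∀ a b, g a b = g b a) {m : α → α → α → α → ℝ}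
    (h₁₂ : ∀ a b c e, m b a c e = m a b c e) (h₂₃ : ∀ a b c e, m a c b e = m a b c e)
    (h₃₄ : ∀ a b c e, m a b e c = m a b c e)
    (hm : ∀ a b c e, a ≤ b → b ≤ c → c ≤ e → m a b c e ≤ g a b * g c e) (a b c e : α) :
    m a b c e ≤ pairingSum g a b c e := by
  refine forall_of_sorted (P := fun a b c e => m a b c e ≤ pairingSum g a b c e)
    (fun a b c e h => ?_) (fun a b c e h => ?_) (fun a b c e h => ?_)
    (fun a b c e hab hbc hce => (hm a b c e hab hbc hce).trans ?_) a b c e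
  · rw [pairingSum] at h ⊢
    rw [h₁₂, hgc b a]
    linarith
  · rw [pairingSum] at h ⊢
    rw [h₂₃, hgc c b]
    linarith
  · rw [pairingSum] at h ⊢
    rw [h₃₄, hgc e c]
    linarith
  · rw [pairingSum, add_assoc]
    exact le_add_of_nonneg_right
      (add_nonneg (mul_nonneg (hg _ _) (hg _ _)) (mul_nonneg (hg _ _) (hg _ _)))

lemma sum_pairingSum {α : Type*} (g : α → α → ℝ) (s : Finset α) :
    ∑ a ∈ s, ∑ b ∈ s, ∑ c ∈ s, ∑ e ∈ s, pairingSum g a b c e =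
      3 * (∑ a ∈ s, ∑ b ∈ s, g a b) ^ 2 := by
  have h₁₂ : ∑ a ∈ s, ∑ b ∈ s, ∑ c ∈ s, ∑ e ∈ s, g a b * g c e =
      (∑ a ∈ s, ∑ b ∈ s, g a b) ^ 2 := by
    simp_rw [← Finset.mul_sum, ← Finset.sum_mul]
    exact (sq _).symm
  have h₁₃ : ∑ a ∈ s, ∑ b ∈ s, ∑ c ∈ s, ∑ e ∈ s, g a c * g b e =
      (∑ a ∈ s, ∑ b ∈ s, g a b) ^ 2 := by
    rw [← h₁₂]
    exact Finset.sum_congr rfl fun a _ => Finset.sum_comm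
  have h₁₄ : ∑ a ∈ s, ∑ b ∈ s, ∑ c ∈ s, ∑ e ∈ s, g a e * g b c =
      (∑ a ∈ s, ∑ b ∈ s, g a b) ^ 2 := by
    rw [← h₁₃]
    exact Finset.sum_congr rfl fun a _ => Finset.sum_congr rfl fun b _ => Finset.sum_comm
  simp only [pairingSum, Finset.sum_add_distrib, h₁₂, h₁₃, h₁₄]
  ring

end Combinatorics

section FourthMoments

variable {Ω : Type*} [MeasurableSpace Ω] {μ : Measure Ω} [IsProbabilityMeasure μ] {ξ : ℤ → Ω → ℝ}

lemma IsExpMixing.summable_sqrt_mul_abs_integral_mul (h : IsExpMixing μ ξ)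
    (habs : ∀ k ω, |ξ k ω| = 1) (hcent : ∀ k, ∫ ω, ξ k ω ∂μ = 0) :
    Summable fun p : ℕ => √(1 + (p : ℝ)) * |∫ ω, ξ 0 ω * ξ (p : ℤ) ω ∂μ| := by
  obtain ⟨C, ρ, _, hρ, hρ1, hlast⟩ := h.exists_abs_mixedMoment_add_singleton_le habs hcent
  have hsum : Summable fun p : ℕ => C * 2 * (ρ ^ p + (p : ℝ) ^ 1 * ρ ^ p) :=
    ((summable_geometric_of_lt_one hρ.le hρ1).add (summable_pow_mul_geometric_of_norm_lt_one 1
      (by rwa [Real.norm_of_nonneg hρ.le]))).mul_left _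
  refine hsum.of_nonneg_of_le (fun p => by positivity) fun p => ?_
  have hcorr : |∫ ω, ξ 0 ω * ξ (p : ℤ) ω ∂μ| ≤ C * 2 * ρ ^ p := by
    simpa [mixedMoment, one_add_one_eq_two] using hlast {0} 0 p (by simp)
  have hsqrt : √(1 + (p : ℝ)) ≤ 1 + p :=
    Real.sqrt_le_iff.2 ⟨by positivity, by nlinarith [p.cast_nonneg (α := ℝ)]⟩
  calc _ ≤ (1 + (p : ℝ)) * (C * 2 * ρ ^ p) := by gcongr
    _ = _ := by ring

lemma exists_sum_abs_integral_four_le (h : IsExpMixing μ ξ)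
    (hneg : IsExpMixing μ fun k => ξ (-k)) (habs : ∀ k ω, |ξ k ω| = 1)
    (hcent : ∀ k, ∫ ω, ξ k ω ∂μ = 0) :
    ∃ B : ℝ, ∀ N : ℕ, ∑ a ∈ Finset.range N, ∑ b ∈ Finset.range N, ∑ c ∈ Finset.range N,
      ∑ e ∈ Finset.range N, |∫ ω, ξ (a : ℤ) ω * ξ (b : ℤ) ω * ξ (c : ℤ) ω * ξ (e : ℤ) ω ∂μ| ≤
        B * (N : ℝ) ^ 2 := by
  obtain ⟨C, κ, hC, hκ, hκ1, hfour⟩ := exists_abs_mixedMoment_four_le h hneg habs hcent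
  let g : ℕ → ℕ → ℝ := fun a b => √C * κ ^ Nat.dist a b
  have hle : ∀ a b c e : ℕ, |∫ ω, ξ (a : ℤ) ω * ξ (b : ℤ) ω * ξ (c : ℤ) ω * ξ (e : ℤ) ω ∂μ| ≤
      pairingSum g a b c e := by
    refine le_pairingSum (fun a b => by positivity) (fun a b => by simp only [g, Nat.dist_comm])
      ?_ ?_ ?_ fun a b c e hab hbc hce => ?_
    iterate 3
      · intro a b c e
        congr 2 with ω
        ring
    calc _ = |mixedMoment μ ξ {(a : ℤ), (b : ℤ), (c : ℤ), (e : ℤ)}| := by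
          simp [mixedMoment, mul_assoc]
      _ ≤ C * (κ ^ Nat.dist a b * κ ^ Nat.dist c e) := hfour a b c e hab hbc hce
      _ = (√C * √C) * (κ ^ Nat.dist a b * κ ^ Nat.dist c e) := by rw [Real.mul_self_sqrt hC]
      _ = g a b * g c e := by ring
  refine ⟨3 * (√C * (2 * (1 - κ)⁻¹)) ^ 2, fun N => ?_⟩
  have hg : ∑ a ∈ Finset.range N, ∑ b ∈ Finset.range N, g a b ≤ √C * (N * (2 * (1 - κ)⁻¹)) := by
    simp_rw [g, ← Finset.mul_sum]
    gcongr
    exact sum_sum_pow_dist_le hκ hκ1 N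
  calc _ ≤ ∑ a ∈ Finset.range N, ∑ b ∈ Finset.range N, ∑ c ∈ Finset.range N,
        ∑ e ∈ Finset.range N, pairingSum g a b c e := by
        gcongr with a _ b _ c _ e _
        exact hle a b c e
    _ = 3 * (∑ a ∈ Finset.range N, ∑ b ∈ Finset.range N, g a b) ^ 2 := sum_pairingSum g _
    _ ≤ 3 * (√C * (N * (2 * (1 - κ)⁻¹))) ^ 2 := by gcongr
    _ = _ := by ring

theorem cond4_of_isExpMixing (h : IsExpMixing μ ξ) (hneg : IsExpMixing μ fun k => ξ (-k))
    (habs : ∀ k ω, |ξ k ω| = 1) (hcent : ∀ k, ∫ ω, ξ k ω ∂μ = 0) : Cond4 μ ξ := by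
  obtain ⟨B, hB⟩ := exists_sum_abs_integral_four_le h hneg habs hcent
  exact ⟨h.summable_sqrt_mul_abs_integral_mul habs hcent, B, fun N _ => hB N⟩

end FourthMoments

section ToralScenery

open scoped NNReal

variable {d : ℕ} {S : Matrix (Fin d) (Fin d) ℤ} {K η : ℝ≥0} {f : Torus d → ℝ}
  {μ₁ : Measure (ℤ → ℝ)}

lemma torusDist_le (x y : Torus d) : torusDist x y ≤ √d * dist x y := by
  rw [torusDist, dist_eq_norm]
  refine Real.sqrt_le_iff.2 ⟨by positivity, ?_⟩
  rw [mul_pow, Real.sq_sqrt (by positivity)]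
  calc ∑ i, ‖x i - y i‖ ^ 2 ≤ ∑ _i : Fin d, ‖x - y‖ ^ 2 := by
        gcongr with i
        exact norm_le_pi_norm (x - y) i
    _ = d * ‖x - y‖ ^ 2 := by simp

lemma exists_holderWith_of_isHolder {f : Torus d → ℝ} (hf : IsHolder η f) :
    ∃ K : ℝ≥0, HolderWith K η f := by
  obtain ⟨c, hc⟩ := hf
  refine ⟨‖c‖₊ * NNReal.sqrt d ^ (η : ℝ), holderWith_of_dist_le fun x y => ?_⟩
  calc dist (f x) (f y) ≤ c * torusDist x y ^ (η : ℝ) := hc x y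
    _ ≤ |c| * (√d * dist x y) ^ (η : ℝ) := by
        have h0 : 0 ≤ torusDist x y := Real.sqrt_nonneg _
        gcongr
        · exact le_abs_self c
        · exact torusDist_le x y
    _ = |c| * √d ^ (η : ℝ) * dist x y ^ (η : ℝ) := by
        rw [Real.mul_rpow (by positivity) dist_nonneg, mul_assoc]
    _ = _ := by push_cast; simp

theorem isExpMixing_coinToss (hS : IsUnit S.det) (hEig : NoRootOfUnityEigenvalue S) (hη : 0 < η)
    (hf : HolderWith K η f) (hμ₁ : IsIIDUniform μ₁) {p : ℤ → Torus d → ℝ} {e : ℤ → ℤ}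
    (he : Function.Injective e) (hp : ∀ k, Measurable (p k))
    (hrange : ∀ k x, p k x ∈ Set.Icc (0 : ℝ) 1) (hpe : ∀ k x, p (e k) x = f (torusAut (S ^ k) x)) :
    IsExpMixing ((volume : Measure (Torus d)).prod μ₁) fun k => coinToss p (e k) := by
  obtain ⟨C, Λ, ρ, hC, hΛ, hρ, hρ1, hdecor⟩ := exists_norm_covC_prod_le hS hEig hη
  refine ⟨C * (1 + K), Λ, ρ, by positivity, hΛ, hρ, hρ1,
    fun I J F n q s hq hF₁ hF₂ hI hJ => ?_⟩
  have hIJ : Disjoint I J := Finset.disjoint_left.2 fun k hkI hkJ => by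
    have := hI k hkI
    have := (hJ k hkJ).1
    omega
  have hf_range x : f x ∈ Set.Icc (0 : ℝ) 1 := by
    simpa only [hpe, zpow_zero, torusAut_one] using hrange (e 0) x
  have hcov := hdecor I J (fun k x => coinMean (F k) (f x)) (fun k => ‖F k 1 - F k (-1)‖₊ * K) n q s
    (fun k x => norm_coinMean_le (hF₁ k) (hF₂ k) (hf_range x))
    (fun k => holderWith_coinMean_comp hf (F k)) hI hJ
  rw [covC_prod_coinToss hμ₁ hp hrange he hIJ F]
  simp only [hpe]
  refine hcov.trans ?_
  gcongr ?_ * _ * _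
  simp only [NNReal.coe_mul, coe_nnnorm, ← Finset.sum_mul, mul_assoc]
  gcongr C * ?_
  have hI0 : 0 ≤ ∑ k ∈ I, ‖F k 1 - F k (-1)‖ := Finset.sum_nonneg fun _ _ => norm_nonneg _
  have hJ0 : 0 ≤ ∑ k ∈ J, ‖F k 1 - F k (-1)‖ := Finset.sum_nonneg fun _ _ => norm_nonneg _
  nlinarith [K.2]

end ToralScenery

end TorusScenery

open TorusScenery in
theorem statement15_general {d : ℕ} {S : Matrix (Fin d) (Fin d) ℤ} (hS : IsUnit S.det)
    (hEig : NoRootOfUnityEigenvalue S) {η : ℝ} (hη : 0 < η) {f : Torus d → ℝ}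
    (hrange : ∀ x, f x ∈ Set.Icc (0 : ℝ) 1) (hfholder : IsHolder η f)
    (hmean : (∫ x, f x ∂(volume : Measure (Torus d))) = 1 / 2)
    {μ₁ : Measure (ℤ → ℝ)} (hμ₁ : IsIIDUniform μ₁) :
    Cond3 ((volume : Measure (Torus d)).prod μ₁) (coinToss fun k x => f (torusAut (S ^ k) x)) ∧
    Cond4 ((volume : Measure (Torus d)).prod μ₁) (coinToss fun k x => f (torusAut (S ^ k) x)) ∧
    Cond5 ((volume : Measure (Torus d)).prod μ₁) (coinToss fun k x => f (torusAut (S ^ k) x)) := by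
  have := hμ₁.1
  lift η to NNReal using hη.le
  obtain ⟨K, hf⟩ := exists_holderWith_of_isHolder hfholder
  have hfc : Continuous f := hf.continuous hη
  have hS_inv : IsUnit (S⁻¹).det := S.isUnit_nonsing_inv_det hS
  have hmeas (k : ℤ) : Measurable fun x => f (torusAut (S ^ k) x) :=
    (hfc.comp (continuous_torusAut _)).measurable
  have hpres := measurePreserving_torusAut_zpow hS
  have hmean_comp (k : ℤ) : ∫ x, f (torusAut (S ^ k) x) = 1 / 2 := by
    rw [← integral_map (hpres k).aemeasurable hfc.aestronglyMeasurable, (hpres k).map_eq, hmean]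
  have hcond3 := cond3_coinToss hμ₁ hmeas (fun k x => hrange _) hmean_comp hpres
    fun j k x => congrArg f (torusAut_zpow_add hS k j x)
  have hmix := isExpMixing_coinToss hS hEig hη hf hμ₁ (e := id) Function.injective_id hmeas
    (fun k x => hrange _) fun k x => rfl
  have hmix_neg := isExpMixing_coinToss hS_inv (noRootOfUnityEigenvalue_inv hS hEig) hη hf hμ₁
    neg_injective hmeas (fun k x => hrange _) fun k x => by rw [Matrix.zpow_neg hS, Matrix.inv_zpow]
  exact ⟨hcond3, cond4_of_isExpMixing hmix hmix_neg (fun k x => abs_coin _ _) hcond3.2.1,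
    hmix.cond5⟩

/-- For an ergodic algebraic automorphism `T` of the torus and an η-Hölder
function `f : M → [0,1]` with mean `1/2`, the `±1`-valued random scenery
`ξ_k(ω,z) = 2·1_{z_k ≤ f(T^k ω)} − 1` satisfies conditions (3), (4) and (5). -/
theorem statement15 (d : ℕ) (hd : 2 ≤ d) (S : Matrix (Fin d) (Fin d) ℤ) (hdet : S.det = 1)
    (hEig : NoRootOfUnityEigenvalue S) (η : ℝ) (hη : 0 < η)
    (f : Torus d → ℝ) (hfmeas : Measurable f) (hrange : ∀ x, f x ∈ Set.Icc (0 : ℝ) 1)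
    (hfholder : IsHolder η f)
    (hmean : (∫ x, f x ∂(volume : Measure (Torus d))) = 1 / 2)
    (μ₁ : Measure (ℤ → ℝ)) (hμ₁ : IsIIDUniform μ₁) :
    Cond3 ((volume : Measure (Torus d)).prod μ₁)
        (fun (k : ℤ) (x : Torus d × (ℤ → ℝ)) =>
          2 * (if x.2 k ≤ f (Titer (torusAut S) (torusAut S⁻¹) k x.1) then (1 : ℝ) else 0) - 1) ∧
    Cond4 ((volume : Measure (Torus d)).prod μ₁)
        (fun (k : ℤ) (x : Torus d × (ℤ → ℝ)) =>
          2 * (if x.2 k ≤ f (Titer (torusAut S) (torusAut S⁻¹) k x.1) then (1 : ℝ) else 0) - 1) ∧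
    Cond5 ((volume : Measure (Torus d)).prod μ₁)
        (fun (k : ℤ) (x : Torus d × (ℤ → ℝ)) =>
          2 * (if x.2 k ≤ f (Titer (torusAut S) (torusAut S⁻¹) k x.1) then (1 : ℝ) else 0) - 1) := by
  simp only [TorusScenery.titer_torusAut]
  exact statement15_general (hdet ▸ isUnit_one) hEig hη hrange hfholder hmean hμ₁
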